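/- arXiv:math/0511145 — 2 statements merged into one kernel-verified Lean document; each statement's English description precedes it below -/
import Mathlib

section
/- For d ≥ 3 and a natural number s > d/2, there exists a constant K such that for all u₁, u₂ ∈ H^s(ℝᵈ), ‖u₁u₂‖_{H^s} ≤ K‖∇u₁‖_{H^{s-1}}‖u₂‖_{H^s}. That is, the product can be estimated using only the gradient of the first factor in H^{s-1}, not u₁ itself in H^s. -/
open MeasureTheory SchwartzMap
open scoped FourierTransform Real

noncomputable section

abbrev Euc (d : ℕ) := EuclideanSpace ℝ (Fin d)

/-- Square of the `H^s` norm via the Fourier transform. -/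
def hNormSq (d : ℕ) (s : ℝ) (u : Euc d → ℂ) : ℝ :=
  ∫ ξ : Euc d, (1 + ‖ξ‖ ^ 2) ^ s * ‖𝓕 u ξ‖ ^ 2

def hNorm (d : ℕ) (s : ℝ) (u : Euc d → ℂ) : ℝ := Real.sqrt (hNormSq d s u)

/-- `i`-th partial derivative. -/
def pd (d : ℕ) (i : Fin d) (u : Euc d → ℂ) : Euc d → ℂ :=
  fun x => fderiv ℝ u x (EuclideanSpace.single i 1)

/-- `H^s` norm of the full gradient of a scalar function. -/
def gradHNorm (d : ℕ) (s : ℝ) (u : Euc d → ℂ) : ℝ :=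
  Real.sqrt (∑ i, hNormSq d s (pd d i u))

open scoped ENNReal

theorem cs_aux {E : Type*} [MeasurableSpace E] (μ : Measure E) {f g : E → ℝ≥0∞} (hf : Measurable f)
    (hg : Measurable g) : (∫⁻ x, f x * g x ∂μ) ^ 2 ≤ (∫⁻ x, f x ^ 2 ∂μ) * ∫⁻ x, g x ^ 2 ∂μ := by
  have h := ENNReal.lintegral_mul_le_Lp_mul_Lq μ Real.HolderConjugate.two_two
    hf.aemeasurable hg.aemeasurable
  simp only [Pi.mul_apply, ENNReal.rpow_two] at h
  calc _ ≤ _ := pow_le_pow_left' h 2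
    _ = _ := by
      rw [mul_pow, ← ENNReal.rpow_natCast, ← ENNReal.rpow_natCast, ← ENNReal.rpow_mul,
        ← ENNReal.rpow_mul]
      norm_num

theorem cs_weight {E : Type*} [MeasurableSpace E] (μ : Measure E) {a b : E → ℝ≥0∞}
    (ha : Measurable a) (hb : Measurable b) :
    (∫⁻ x, a x * b x ∂μ) ^ 2 ≤ (∫⁻ x, a x ∂μ) * ∫⁻ x, a x * b x ^ 2 ∂μ := by
  have h := cs_aux μ (f := fun x => a x ^ (1/2:ℝ)) (g := fun x => a x ^ (1/2:ℝ) * b x)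
    (by fun_prop) (by fun_prop)
  have e : ∀ x, (a x ^ (1/2:ℝ)) * (a x ^ (1/2:ℝ)) = a x := fun x => by
    rw [← ENNReal.rpow_add_of_nonneg _ _ (by norm_num) (by norm_num)]; norm_num
  simpa only [← mul_assoc, e, mul_pow, pow_two (_ ^ (1/2:ℝ))] using h

theorem young_aux {d : ℕ} {a b : EuclideanSpace ℝ (Fin d) → ℝ≥0∞} (ha : Measurable a)
    (hb : Measurable b) :
    ∫⁻ x, (∫⁻ y, a y * b (x - y)) ^ 2 ≤ (∫⁻ x, a x) ^ 2 * ∫⁻ x, b x ^ 2 := by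
  calc _ ≤ ∫⁻ x, (∫⁻ y, a y) * ∫⁻ y, a y * b (x - y) ^ 2 :=
        lintegral_mono fun x => cs_weight _ ha (by fun_prop)
    _ = (∫⁻ y, a y) * ∫⁻ x, ∫⁻ y, a y * b (x - y) ^ 2 := by
        rw [lintegral_const_mul]
        apply Measurable.lintegral_prod_right
        fun_prop
    _ = (∫⁻ y, a y) * ∫⁻ y, ∫⁻ x, a y * b (x - y) ^ 2 := by
        rw [lintegral_lintegral_swap]
        fun_prop
    _ = (∫⁻ y, a y) * ∫⁻ y, a y * ∫⁻ x, b x ^ 2 := by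
        congr 1; congr 1; ext y
        rw [lintegral_const_mul _ (by fun_prop)]
        rw [lintegral_sub_right_eq_self (fun x => b x ^ 2) y]
    _ = _ := by
        rw [lintegral_mul_const _ ha, pow_two, mul_assoc]

theorem young_aux' {d : ℕ} {a b : EuclideanSpace ℝ (Fin d) → ℝ≥0∞} (ha : Measurable a)
    (hb : Measurable b) :
    ∫⁻ x, (∫⁻ y, a y * b (x - y)) ^ 2 ≤ (∫⁻ x, b x) ^ 2 * ∫⁻ x, a x ^ 2 := by
  convert young_aux hb ha using 4 with x
  rw [← lintegral_sub_left_eq_self _ x]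
  simp [mul_comm]

theorem add_pow_aux (x y : ℝ≥0∞) (n : ℕ) : (x + y) ^ n ≤ 2 ^ n * (x ^ n + y ^ n) := by
  rcases le_total x y with h | h
  · calc _ ≤ (2 * y) ^ n := by rw [two_mul]; gcongr
      _ ≤ _ := by rw [mul_pow]; gcongr; exact le_add_self
  · calc _ ≤ (2 * x) ^ n := by rw [two_mul]; gcongr
      _ ≤ _ := by rw [mul_pow]; gcongr; exact le_self_add

/-- core estimate, `s = k+1`. -/
theorem core_aux {d k : ℕ} {a b h p q : EuclideanSpace ℝ (Fin d) → ℝ≥0∞} (ha : Measurable a)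
    (hb : Measurable b) (hp : Measurable p) (hq : Measurable q)
    (hh : ∀ x, h x ≤ ∫⁻ y, a y * b (x - y))
    (hpq : ∀ x y, q x ≤ p y + q (x - y)) (hle : ∀ x, p x ≤ q x)
    (hp0 : ∀ᵐ x, p x ≠ 0) (hq0 : ∀ x, q x ≠ 0) (hqt : ∀ x, q x ≠ ⊤) :
    ∫⁻ x, (q x ^ (k+1) * h x) ^ 2 ≤
      (4 * (2 ^ (k+1)) ^ 2 * ((∫⁻ x, ((q x ^ (k+1))⁻¹) ^ 2) + ∫⁻ x, ((p x * q x ^ k)⁻¹) ^ 2)) *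
        (∫⁻ x, (p x * q x ^ k * a x) ^ 2) * ∫⁻ x, (q x ^ (k+1) * b x) ^ 2 := by
  set A := ∫⁻ x, (p x * q x ^ k * a x) ^ 2 with hA
  set B := ∫⁻ x, (q x ^ (k+1) * b x) ^ 2 with hB
  have hpt : ∀ x, p x ≠ ⊤ := fun x => ne_top_of_le_ne_top (hqt x) (hle x)
  have h1 : (∫⁻ x, b x) ^ 2 ≤ (∫⁻ x, ((q x ^ (k+1))⁻¹) ^ 2) * B := by
    refine le_trans (le_of_eq ?_) (cs_aux volume (by fun_prop) (by fun_prop))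
    congr 1
    refine lintegral_congr fun x => ?_
    rw [← mul_assoc, ENNReal.inv_mul_cancel (pow_ne_zero _ (hq0 x)) (ENNReal.pow_ne_top (hqt x)),
      one_mul]
  have h2 : (∫⁻ x, a x) ^ 2 ≤ (∫⁻ x, ((p x * q x ^ k)⁻¹) ^ 2) * A := by
    refine le_trans (le_of_eq ?_) (cs_aux volume (by fun_prop) (by fun_prop))
    congr 1
    refine lintegral_congr_ae ?_
    filter_upwards [hp0] with x hx
    rw [← mul_assoc, ENNReal.inv_mul_cancel (mul_ne_zero hx (pow_ne_zero _ (hq0 x)))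
      (ENNReal.mul_ne_top (hpt x) (ENNReal.pow_ne_top (hqt x))), one_mul]
  have h3 : ∫⁻ x, (p x ^ (k+1) * a x) ^ 2 ≤ A := by
    refine lintegral_mono fun x => ?_
    rw [pow_succ' (p x) k]
    gcongr
    exact hle x
  have h4 : ∀ x, q x ^ (k+1) * h x ≤ 2 ^ (k+1) * ((∫⁻ y, (p y ^ (k+1) * a y) * b (x - y)) +
      ∫⁻ y, a y * (fun z => q z ^ (k+1) * b z) (x - y)) := by
    intro x
    calc _ ≤ q x ^ (k+1) * ∫⁻ y, a y * b (x - y) := by gcongr; exact hh x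
      _ = ∫⁻ y, q x ^ (k+1) * (a y * b (x - y)) := by rw [lintegral_const_mul _ (by fun_prop)]
      _ ≤ ∫⁻ y, 2 ^ (k+1) * ((p y ^ (k+1) * a y) * b (x - y) + a y * (q (x-y) ^ (k+1) * b (x - y))) := by
        refine lintegral_mono fun y => ?_
        calc _ ≤ (2 ^ (k+1) * (p y ^ (k+1) + q (x-y) ^ (k+1))) * (a y * b (x - y)) := by
              gcongr
              exact (pow_le_pow_left' (hpq x y) _).trans (add_pow_aux _ _ _)
          _ = _ := by ring
      _ = _ := by
        rw [lintegral_const_mul _ (by fun_prop), lintegral_add_left (by fun_prop)]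
  have m1 : Measurable fun x => ∫⁻ y, (p y ^ (k+1) * a y) * b (x - y) := by
    apply Measurable.lintegral_prod_right
    fun_prop
  have m2 : Measurable fun x => ∫⁻ y, a y * (fun z => q z ^ (k+1) * b z) (x - y) := by
    apply Measurable.lintegral_prod_right
    fun_prop
  calc _ ≤ ∫⁻ x, (4 * (2 ^ (k+1)) ^ 2) * ((∫⁻ y, (p y ^ (k+1) * a y) * b (x - y)) ^ 2 +
      (∫⁻ y, a y * (fun z => q z ^ (k+1) * b z) (x - y)) ^ 2) := by
        refine lintegral_mono fun x => ?_
        calc _ ≤ _ := pow_le_pow_left' (h4 x) 2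
          _ ≤ (2 ^ (k+1)) ^ 2 * (2 ^ 2 * _) := by
            rw [mul_pow]; gcongr; exact add_pow_aux _ _ _
          _ = _ := by ring
    _ = (4 * (2 ^ (k+1)) ^ 2) * ((∫⁻ x, (∫⁻ y, (p y ^ (k+1) * a y) * b (x - y)) ^ 2) +
      ∫⁻ x, (∫⁻ y, a y * (fun z => q z ^ (k+1) * b z) (x - y)) ^ 2) := by
        rw [lintegral_const_mul _ (by fun_prop), lintegral_add_left (by fun_prop)]
    _ ≤ (4 * (2 ^ (k+1)) ^ 2) * (((∫⁻ x, ((q x ^ (k+1))⁻¹) ^ 2) * B) * A +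
        ((∫⁻ x, ((p x * q x ^ k)⁻¹) ^ 2) * A) * B) := by
        gcongr
        · refine (young_aux' (a := fun y => p y ^ (k+1) * a y) (by fun_prop) hb).trans ?_
          gcongr
        · refine (young_aux ha (b := fun y => q y ^ (k+1) * b y) (by fun_prop)).trans ?_
          gcongr
    _ = _ := by ring

theorem fourier_mul_aux {d : ℕ} (u v : 𝓢(Euc d, ℂ)) (x : Euc d) :
    𝓕 (fun x => u x * v x) x = ∫ y, 𝓕 u y * 𝓕 v (x - y) := by
  have h := SchwartzMap.convolution_apply (ContinuousLinearMap.mul ℂ ℂ) (𝓕 u) (𝓕 v) x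
  have h2 : SchwartzMap.convolution (ContinuousLinearMap.mul ℂ ℂ) (𝓕 u) (𝓕 v) x
      = 𝓕 (fun x => u x * v x) x := by
    have e : SchwartzMap.convolution (ContinuousLinearMap.mul ℂ ℂ) (𝓕 u) (𝓕 v) =
      𝓕⁻ (SchwartzMap.pairing (ContinuousLinearMap.mul ℂ ℂ) (𝓕 (𝓕 u)) (𝓕 (𝓕 v))) := by
      rw [← SchwartzMap.fourier_convolution]; simp
    have ff : ∀ (w : 𝓢(Euc d, ℂ)) y, 𝓕 (𝓕 w) y = w (-y) := by
      intro w y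
      have : 𝓕⁻ (𝓕 w) (-y) = w (-y) := by simp
      rw [← this, SchwartzMap.fourierInv_coe, Real.fourierInv_eq_fourier_neg, neg_neg,
        SchwartzMap.fourier_coe]
    rw [e, SchwartzMap.fourierInv_coe, Real.fourierInv_eq_fourier_comp_neg]
    have e2 : (fun y => (SchwartzMap.pairing (ContinuousLinearMap.mul ℂ ℂ) (𝓕 (𝓕 u)) (𝓕 (𝓕 v))) (-y))
        = fun y => u y * v y := by
      ext y
      simp [ff]
    rw [e2]
  rw [← h2, h]
  rfl

theorem integrable_weight_aux {d : ℕ} (t : ℝ) (u : 𝓢(Euc d, ℂ)) :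
    Integrable fun x : Euc d => (1 + ‖x‖ ^ 2) ^ t * ‖u x‖ ^ 2 := by
  have hg : (fun x : Euc d ↦ (((1 + ‖x‖ ^ 2) ^ (t / 2) : ℝ) : ℂ)).HasTemperateGrowth := by fun_prop
  have h := (SchwartzMap.smulLeftCLM ℂ (fun x : Euc d ↦ (((1 + ‖x‖ ^ 2) ^ (t / 2) : ℝ) : ℂ)) u).memLp 2
  rw [memLp_two_iff_integrable_sq_norm h.1] at h
  refine h.congr (Filter.Eventually.of_forall fun x => ?_)
  have h0 : 0 ≤ 1 + ‖x‖ ^ 2 := by positivity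
  simp only [SchwartzMap.smulLeftCLM_apply_apply hg, norm_smul, mul_pow, Complex.norm_real,
    Real.norm_eq_abs, sq_abs]
  rw [← Real.rpow_natCast, ← Real.rpow_mul h0]
  norm_num

theorem fourier_pd_aux {d : ℕ} (u : 𝓢(Euc d, ℂ)) (i : Fin d) (x : Euc d) :
    ‖𝓕 (pd d i u) x‖ ^ 2 = (2 * π) ^ 2 * (x i ^ 2 * ‖𝓕 u x‖ ^ 2) := by
  have h := congrArg (fun f : 𝓢(Euc d, ℂ) => f x)
    (SchwartzMap.fourier_lineDerivOp_eq u (EuclideanSpace.single i (1:ℝ)))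
  have hg : (inner ℝ · (EuclideanSpace.single i (1:ℝ)) : Euc d → ℝ).HasTemperateGrowth := by fun_prop
  simp only [SchwartzMap.fourier_coe, smul_apply,
    SchwartzMap.smulLeftCLM_apply_apply hg] at h
  change 𝓕 (pd d i u) x = _ at h
  rw [h]
  have hin : inner ℝ x (EuclideanSpace.single i (1:ℝ)) = x i := by
    rw [EuclideanSpace.inner_single_right]; simp
  rw [hin, ← SchwartzMap.fourier_coe]
  simp [mul_pow]

theorem grad_aux {d : ℕ} (t : ℝ) (u : 𝓢(Euc d, ℂ)) :
    Integrable (fun x : Euc d => (1 + ‖x‖ ^ 2) ^ t * (‖x‖ ^ 2 * ‖𝓕 u x‖ ^ 2)) ∧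
    gradHNorm d t u = (2 * π) * Real.sqrt (∫ x : Euc d, (1 + ‖x‖ ^ 2) ^ t * (‖x‖ ^ 2 * ‖𝓕 u x‖ ^ 2)) := by
  have hi : ∀ i : Fin d, Integrable fun x : Euc d => (1 + ‖x‖ ^ 2) ^ t * ‖𝓕 (pd d i u) x‖ ^ 2 :=
    fun i => integrable_weight_aux t
      (𝓕 (LineDeriv.lineDerivOp (EuclideanSpace.single i (1:ℝ)) u))
  have e : ∀ x : Euc d, ∑ i, (1 + ‖x‖ ^ 2) ^ t * ‖𝓕 (pd d i u) x‖ ^ 2 =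
      (2 * π) ^ 2 * ((1 + ‖x‖ ^ 2) ^ t * (‖x‖ ^ 2 * ‖𝓕 u x‖ ^ 2)) := by
    intro x
    simp_rw [fourier_pd_aux]
    rw [← Finset.mul_sum, ← Finset.mul_sum, ← Finset.sum_mul, EuclideanSpace.real_norm_sq_eq]
    ring
  constructor
  · have := (integrable_finsetSum Finset.univ fun i _ => hi i)
    simp_rw [e] at this
    refine (this.const_mul ((2 * π) ^ 2)⁻¹).congr (Filter.Eventually.of_forall fun x => ?_)
    have : (2 * π) ^ 2 ≠ 0 := by positivity
    simp only
    rw [inv_mul_cancel_left₀ this]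
  · unfold gradHNorm hNormSq
    rw [← integral_finsetSum _ fun i _ => hi i]
    simp_rw [e]
    rw [integral_const_mul, Real.sqrt_mul (by positivity), Real.sqrt_sq (by positivity)]

/-- weights -/
def wp (d : ℕ) (x : Euc d) : ℝ≥0∞ := ENNReal.ofReal ‖x‖
def wq (d : ℕ) (x : Euc d) : ℝ≥0∞ := ENNReal.ofReal (Real.sqrt (1 + ‖x‖ ^ 2))

theorem tri_aux {d : ℕ} (x y : Euc d) : wq d x ≤ wp d y + wq d (x - y) := by
  unfold wp wq
  rw [← ENNReal.ofReal_add (by positivity) (by positivity)]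
  apply ENNReal.ofReal_le_ofReal
  apply Real.sqrt_le_iff.2 ⟨by positivity, ?_⟩
  have h1 : ‖x‖ ≤ ‖y‖ + ‖x - y‖ := by
    simpa using norm_add_le y (x - y)
  have h2 : ‖x - y‖ ≤ Real.sqrt (1 + ‖x - y‖ ^ 2) := Real.le_sqrt_of_sq_le (by linarith)
  have h3 := Real.sq_sqrt (show 0 ≤ 1 + ‖x - y‖ ^ 2 by positivity)
  have := norm_nonneg x
  have := norm_nonneg y
  have := mul_le_mul_of_nonneg_left h2 (norm_nonneg y)
  nlinarith

theorem wq_sq {d : ℕ} (x : Euc d) (n : ℕ) :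
    (wq d x ^ n) ^ 2 = ENNReal.ofReal ((1 + ‖x‖ ^ 2) ^ (n : ℝ)) := by
  unfold wq
  rw [← pow_mul, mul_comm, pow_mul, ← ENNReal.ofReal_pow (by positivity),
    Real.sq_sqrt (by positivity), ← ENNReal.ofReal_pow (by positivity), Real.rpow_natCast]

theorem fin1_aux {d s : ℕ} (hs : (d : ℝ) / 2 < s) : ∫⁻ x, ((wq d x ^ s)⁻¹) ^ 2 ≠ ⊤ := by
  have h := integrable_rpow_neg_one_add_norm_sq (E := Euc d) (μ := volume) (r := 2 * s)
    (by simp; linarith)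
  have h2 := h.lintegral_lt_top.ne
  convert h2 using 3 with x
  rw [← ENNReal.inv_pow, wq_sq, ← ENNReal.ofReal_inv_of_pos (by positivity),
    ← Real.rpow_neg (by positivity)]
  congr 2; ring

theorem fin2_aux {d k : ℕ} (hd : 3 ≤ d) (hs : (d : ℝ) / 2 < k + 1) :
    ∫⁻ x, ((wp d x * wq d x ^ k)⁻¹) ^ 2 ≠ ⊤ := by
  have : Nontrivial (Euc d) := by
    have : Nonempty (Fin d) := ⟨⟨0, by omega⟩⟩
    infer_instance
  have h : Integrable (fun x : Euc d => (fun r : ℝ => (r ^ 2)⁻¹ * (1 + r ^ 2) ^ (-(k:ℝ))) ‖x‖) := by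
    refine (integrable_fun_norm_addHaar volume
      (f := fun r : ℝ => (r ^ 2)⁻¹ * (1 + r ^ 2) ^ (-(k:ℝ)))).2 ?_
    have h1 := integrable_rpow_neg_one_add_norm_sq (E := ℝ) (μ := volume) (r := 2 * k + 3 - d)
      (by simp; linarith)
    refine (h1.integrableOn (s := Set.Ioi 0)).mono' ?_ ?_
    · exact Measurable.aestronglyMeasurable (by fun_prop)
    · filter_upwards [ae_restrict_mem measurableSet_Ioi] with r hr
      have hr : 0 < r := hr
      have hw : 0 < 1 + r ^ 2 := by positivity
      rw [Real.norm_of_nonneg (by positivity)]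
      simp only [finrank_euclideanSpace, Fintype.card_fin, smul_eq_mul, Real.norm_eq_abs, sq_abs]
      obtain ⟨m, rfl⟩ : ∃ m, d = m + 3 := ⟨d - 3, by omega⟩
      have e : r ^ (m + 3 - 1) * ((r ^ 2)⁻¹ * (1 + r ^ 2) ^ (-(k:ℝ)))
          = r ^ m * (1 + r ^ 2) ^ (-(k:ℝ)) := by
        rw [show m + 3 - 1 = m + 2 by omega, pow_add]; field_simp
      rw [e]
      have h5 : r ^ m ≤ (1 + r ^ 2) ^ ((m:ℝ) / 2) := by
        rw [← Real.rpow_natCast, show (m:ℝ) / 2 = (1/2) * m by ring, Real.rpow_mul hw.le,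
          ← Real.sqrt_eq_rpow]
        apply Real.rpow_le_rpow hr.le _ (by positivity)
        exact Real.le_sqrt_of_sq_le (by linarith)
      calc _ ≤ (1 + r ^ 2) ^ ((m:ℝ) / 2) * (1 + r ^ 2) ^ (-(k:ℝ)) := by gcongr
        _ = _ := by
          rw [← Real.rpow_add hw]; congr 1; push_cast; ring
  have h2 := h.lintegral_lt_top.ne
  rw [show ∫⁻ x, ((wp d x * wq d x ^ k)⁻¹) ^ 2 = _ from lintegral_congr_ae ?_]
  · exact h2
  · filter_upwards [Measure.ae_ne volume (0 : Euc d)] with x hx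
    have hx : 0 < ‖x‖ := norm_pos_iff.2 hx
    rw [← ENNReal.inv_pow, mul_pow, wq_sq, wp, ← ENNReal.ofReal_pow (by positivity),
      ← ENNReal.ofReal_mul (by positivity), ← ENNReal.ofReal_inv_of_pos (by positivity), mul_inv,
      ← Real.rpow_neg (by positivity)]

theorem statement3 (d s : ℕ) (hd : 3 ≤ d) (hs : (d : ℝ) / 2 < s) :
    ∃ K : ℝ, ∀ u₁ u₂ : 𝓢(Euc d, ℂ),
      hNorm d s (fun x => u₁ x * u₂ x)
        ≤ K * gradHNorm d ((s : ℝ) - 1) u₁ * hNorm d s u₂ := by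
  obtain ⟨k, rfl⟩ : ∃ k, s = k + 1 := by
    refine ⟨s - 1, ?_⟩
    have : s ≠ 0 := by
      rintro rfl
      have : (0:ℝ) ≤ d := by positivity
      simp at hs; linarith
    omega
  have : Nontrivial (Euc d) := by
    have : Nonempty (Fin d) := ⟨⟨0, by omega⟩⟩
    infer_instance
  set C : ℝ≥0∞ := 4 * (2 ^ (k+1)) ^ 2 * ((∫⁻ x, ((wq d x ^ (k+1))⁻¹) ^ 2) +
    ∫⁻ x, ((wp d x * wq d x ^ k)⁻¹) ^ 2) with hC
  have hCt : C ≠ ⊤ := by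
    refine ENNReal.mul_ne_top (ENNReal.mul_ne_top (by simp) (by simp)) (ENNReal.add_ne_top.2
      ⟨fin1_aux hs, fin2_aux hd (by push_cast at hs; exact hs)⟩)
  refine ⟨Real.sqrt C.toReal / (2 * π), fun u₁ u₂ => ?_⟩
  have mp : Measurable (wp d) := by unfold wp; fun_prop
  have mq : Measurable (wq d) := by unfold wq; fun_prop
  obtain ⟨gi, ge⟩ := grad_aux (((k + 1 : ℕ) : ℝ) - 1) u₁
  have hk : ((k + 1 : ℕ) : ℝ) - 1 = (k : ℝ) := by push_cast; ring
  rw [ge]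
  rw [hk] at gi ⊢
  have key := core_aux (d := d) (k := k) (a := fun x => ‖𝓕 u₁ x‖ₑ) (b := fun x => ‖𝓕 u₂ x‖ₑ)
    (h := fun x => ‖𝓕 (fun x => u₁ x * u₂ x) x‖ₑ) (p := wp d) (q := wq d)
    (𝓕 u₁).continuous.enorm.measurable (𝓕 u₂).continuous.enorm.measurable mp mq
    (fun x => by
      rw [fourier_mul_aux]
      refine (enorm_integral_le_lintegral_enorm _).trans (le_of_eq ?_)
      simp [enorm_mul])
    tri_aux
    (fun x => by
      unfold wp wq
      exact ENNReal.ofReal_le_ofReal (Real.le_sqrt_of_sq_le (by linarith)))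
    (by
      filter_upwards [Measure.ae_ne volume (0 : Euc d)] with x hx
      simpa [wp] using hx)
    (fun x => by
      unfold wq
      have : 0 < Real.sqrt (1 + ‖x‖ ^ 2) := by positivity
      simpa using this)
    (fun x => by simp [wq])
  rw [← hC] at key
  have en : ∀ z : ℂ, ‖z‖ₑ ^ 2 = ENNReal.ofReal (‖z‖ ^ 2) := fun z => by
    rw [← ofReal_norm, ENNReal.ofReal_pow (norm_nonneg z)]
  have e1 : ∀ (x : Euc d) (z : ℂ), (wq d x ^ (k+1) * ‖z‖ₑ) ^ 2 =
      ENNReal.ofReal ((1 + ‖x‖ ^ 2) ^ ((k + 1 : ℕ) : ℝ) * ‖z‖ ^ 2) := by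
    intro x z
    rw [mul_pow, wq_sq, en, ENNReal.ofReal_mul (by positivity)]
  have e2 : ∀ (x : Euc d) (z : ℂ), (wp d x * wq d x ^ k * ‖z‖ₑ) ^ 2 =
      ENNReal.ofReal ((1 + ‖x‖ ^ 2) ^ (k : ℝ) * (‖x‖ ^ 2 * ‖z‖ ^ 2)) := by
    intro x z
    rw [mul_pow, mul_pow, wq_sq, en, wp, ← ENNReal.ofReal_pow (by positivity),
      ← ENNReal.ofReal_mul (by positivity), ← ENNReal.ofReal_mul (by positivity)]
    congr 1; ring
  simp_rw [e1, e2] at key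
  rw [← ofReal_integral_eq_lintegral_ofReal gi
      (Filter.Eventually.of_forall fun x => by positivity),
    ← ofReal_integral_eq_lintegral_ofReal (integrable_weight_aux _ (𝓕 u₂))
      (Filter.Eventually.of_forall fun x => by positivity)] at key
  set Q := ∫ x : Euc d, (1 + ‖x‖ ^ 2) ^ (k : ℝ) * (‖x‖ ^ 2 * ‖𝓕 u₁ x‖ ^ 2) with hQ
  have hQ0 : 0 ≤ Q := integral_nonneg fun x => by positivity
  have hR0 : 0 ≤ hNormSq d ((k + 1 : ℕ) : ℝ) u₂ := integral_nonneg fun x => by positivity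
  change _ ≤ C * ENNReal.ofReal Q * ENNReal.ofReal (hNormSq d ((k + 1 : ℕ) : ℝ) u₂) at key
  have main : hNormSq d ((k + 1 : ℕ) : ℝ) (fun x => u₁ x * u₂ x) ≤
      C.toReal * Q * hNormSq d ((k + 1 : ℕ) : ℝ) u₂ := by
    by_cases hI : Integrable (fun x : Euc d => (1 + ‖x‖ ^ 2) ^ ((k + 1 : ℕ) : ℝ) *
        ‖𝓕 (fun x => u₁ x * u₂ x) x‖ ^ 2)
    · conv_lhs => unfold hNormSq
      rw [integral_eq_lintegral_of_nonneg_ae (Filter.Eventually.of_forall fun x => by positivity)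
        hI.1]
      refine (ENNReal.toReal_mono (by finiteness) key).trans (le_of_eq ?_)
      rw [ENNReal.toReal_mul, ENNReal.toReal_mul, ENNReal.toReal_ofReal hQ0,
        ENNReal.toReal_ofReal hR0]
    · conv_lhs => unfold hNormSq
      rw [integral_undef hI]
      positivity
  unfold hNorm
  calc _ ≤ _ := Real.sqrt_le_sqrt main
    _ = _ := by
      rw [Real.sqrt_mul (by positivity), Real.sqrt_mul (by positivity)]
      have := Real.pi_ne_zero
      field_simp
end
end

section
/- Let d ≥ 3, s > d/2 an integer. There exists a function 𝒞 such that for all φ ∈ H^{s+1}(ℝᵈ) and all vector fields v ∈ H^{s+1}(ℝᵈ), ‖∇v‖_{H^s} ≤ C(‖div(e^φ v)‖_{H^s} + ‖curl v‖_{H^s}) where C = (1+‖φ‖_{H^{s+1}}) 𝒞(‖φ‖_{H^s}, ‖∇φ‖_{L∞}). -/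
open MeasureTheory SchwartzMap
open scoped FourierTransform Real

noncomputable section

section helpers
open scoped ENNReal NNReal

/-- Japanese bracket. -/
def jb {d : ℕ} (ξ : Euc d) : ℝ := Real.sqrt (1 + ‖ξ‖ ^ 2)

/-- Sobolev weight. -/
def wt {d : ℕ} (t : ℝ) (ξ : Euc d) : ℝ := jb ξ ^ t

theorem one_le_jb {d : ℕ} (ξ : Euc d) : 1 ≤ jb ξ := by
  unfold jb
  rw [Real.one_le_sqrt]; nlinarith [sq_nonneg ‖ξ‖]

theorem jb_pos {d : ℕ} (ξ : Euc d) : 0 < jb ξ := lt_of_lt_of_le one_pos (one_le_jb ξ)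

theorem jb_sq {d : ℕ} (ξ : Euc d) : jb ξ ^ 2 = 1 + ‖ξ‖ ^ 2 := by
  unfold jb
  rw [Real.sq_sqrt]; positivity

theorem norm_le_jb {d : ℕ} (ξ : Euc d) : ‖ξ‖ ≤ jb ξ := by
  have := jb_sq ξ
  nlinarith [jb_pos ξ, norm_nonneg ξ]

theorem jb_le_add {d : ℕ} (ξ η : Euc d) : jb ξ ≤ jb η + ‖ξ - η‖ := by
  have h1 := jb_sq ξ
  have h2 := jb_sq η
  have h3 : ‖ξ‖ ≤ ‖η‖ + ‖ξ - η‖ := by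
    have := norm_add_le η (ξ - η)
    simpa using this
  have h4 := norm_le_jb η
  have h5 := jb_pos η
  have h6 := norm_nonneg (ξ - η)
  have h7 := norm_nonneg ξ
  have h8 := norm_nonneg η
  have : jb ξ ^ 2 ≤ (jb η + ‖ξ - η‖) ^ 2 := by
    nlinarith [mul_le_mul_of_nonneg_right h4 h6]
  exact le_of_sq_le_sq₀ this (by positivity)
where
  le_of_sq_le_sq₀ {a b : ℝ} (h : a ^ 2 ≤ b ^ 2) (hb : 0 ≤ b) : a ≤ b := abs_le_of_sq_le_sq' h hb |>.2

theorem jb_neg {d : ℕ} (ξ : Euc d) : jb (-ξ) = jb ξ := by simp [jb]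

theorem jb_abs_sub {d : ℕ} (ξ η : Euc d) : |jb ξ - jb η| ≤ ‖ξ - η‖ := by
  rw [abs_le]
  have h1 := jb_le_add ξ η
  have h2 := jb_le_add η ξ
  rw [norm_sub_rev] at h2
  constructor <;> linarith

theorem jb_le_add' {d : ℕ} (ξ η : Euc d) : jb ξ ≤ jb (ξ - η) + ‖η‖ := by
  have := jb_le_add ξ (ξ - η)
  simpa using this

theorem continuous_jb {d : ℕ} : Continuous (jb : Euc d → ℝ) := by
  unfold jb; fun_prop

theorem wt_pos {d : ℕ} (t : ℝ) (ξ : Euc d) : 0 < wt t ξ := Real.rpow_pos_of_pos (jb_pos ξ) _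

theorem continuous_wt {d : ℕ} (t : ℝ) : Continuous (wt t : Euc d → ℝ) := by
  unfold wt
  exact continuous_jb.rpow_const (fun x => Or.inl (jb_pos x).ne')

theorem wt_sq {d : ℕ} (t : ℝ) (ξ : Euc d) : wt t ξ ^ 2 = (1 + ‖ξ‖ ^ 2) ^ t := by
  unfold wt
  rw [← jb_sq, ← Real.rpow_natCast, ← Real.rpow_natCast, ← Real.rpow_mul (jb_pos ξ).le,
    ← Real.rpow_mul (jb_pos ξ).le, mul_comm]

theorem wt_eq {d : ℕ} (t : ℝ) (ξ : Euc d) : wt t ξ = (1 + ‖ξ‖ ^ 2) ^ (t / 2) := by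
  unfold wt jb
  rw [Real.sqrt_eq_rpow, ← Real.rpow_mul (by positivity)]; congr 1; ring

theorem wt_add {d : ℕ} (t u : ℝ) (ξ : Euc d) : wt (t + u) ξ = wt t ξ * wt u ξ :=
  Real.rpow_add (jb_pos ξ) _ _

theorem wt_zero {d : ℕ} (ξ : Euc d) : wt 0 ξ = 1 := Real.rpow_zero _
theorem wt_one {d : ℕ} (ξ : Euc d) : wt 1 ξ = jb ξ := Real.rpow_one _

theorem wt_mono {d : ℕ} {t u : ℝ} (h : t ≤ u) (ξ : Euc d) : wt t ξ ≤ wt u ξ :=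
  Real.rpow_le_rpow_of_exponent_le (one_le_jb ξ) h

theorem kernel_aux {p q t ε : ℝ} (hp : 0 < p) (hq : 0 < q) (ht : 1 ≤ t) (h0 : 0 ≤ ε) (h1 : ε ≤ 1) :
    p * (p + q) ^ (t - 1) ≤ 2 ^ (t - 1) * (p ^ t + p ^ ε * q ^ (t - ε)) := by
  have hA : 0 < p ^ t := Real.rpow_pos_of_pos hp _
  have hB : 0 < p ^ ε * q ^ (t - ε) := mul_pos (Real.rpow_pos_of_pos hp _) (Real.rpow_pos_of_pos hq _)
  have h2 : (0:ℝ) < 2 ^ (t - 1) := Real.rpow_pos_of_pos two_pos _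
  rcases le_total q p with h | h
  · calc p * (p + q) ^ (t - 1) ≤ p * (2 * p) ^ (t - 1) := by
          gcongr
          linarith
      _ = 2 ^ (t - 1) * p ^ t := by
          rw [Real.mul_rpow two_pos.le hp.le]
          have : p ^ t = p * p ^ (t - 1) := by
            rw [← Real.rpow_one_add' hp.le (by linarith)]; congr 1; ring
          rw [this]; ring
      _ ≤ _ := by gcongr; linarith
  · have e1 : p = p ^ ε * p ^ (1 - ε) := by
      rw [← Real.rpow_add hp]; simp
    calc p * (p + q) ^ (t - 1) ≤ p * (2 * q) ^ (t - 1) := by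
          gcongr
          linarith
      _ = 2 ^ (t - 1) * (p ^ ε * p ^ (1 - ε) * q ^ (t - 1)) := by
          rw [Real.mul_rpow two_pos.le hq.le]
          nth_rewrite 1 [e1]; ring
      _ ≤ 2 ^ (t - 1) * (p ^ ε * q ^ (1 - ε) * q ^ (t - 1)) := by
          have : p ^ (1 - ε) ≤ q ^ (1 - ε) := Real.rpow_le_rpow hp.le h (by linarith)
          gcongr
      _ = 2 ^ (t - 1) * (p ^ ε * q ^ (t - ε)) := by
          rw [mul_assoc (p ^ ε), ← Real.rpow_add hq]; congr 3; ring
      _ ≤ _ := by gcongr; linarith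

theorem rpow_sub_le {x y t : ℝ} (hx : 0 < x) (hxy : x ≤ y) (ht : 1 ≤ t) :
    y ^ t - x ^ t ≤ t * (y - x) * y ^ (t - 1) := by
  have hy : 0 < y := hx.trans_le hxy
  have hs : -1 ≤ x / y - 1 := by
    have : 0 < x / y := by positivity
    linarith
  have h := one_add_mul_self_le_rpow_one_add hs ht
  have e : (1 + (x / y - 1)) = x / y := by ring
  rw [e, Real.div_rpow hx.le hy.le, le_div_iff₀ (Real.rpow_pos_of_pos hy _)] at h
  have e2 : y ^ t = y * y ^ (t - 1) := by
    rw [← Real.rpow_one_add' hy.le (by linarith)]; congr 1; ring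
  have e3 : (1 + t * (x / y - 1)) * y ^ t = y ^ t - t * (y - x) * y ^ (t - 1) := by
    rw [e2]; field_simp; ring
  linarith

theorem kernel1 {d : ℕ} {t ε : ℝ} (ht : 1 ≤ t) (h0 : 0 ≤ ε) (h1 : ε ≤ 1) (ξ η : Euc d) :
    |wt t ξ - wt t η| ≤ t * 2 ^ (t - 1) * (wt t (ξ - η) + wt ε (ξ - η) * wt (t - ε) η) := by
  have key := kernel_aux (jb_pos (ξ - η)) (jb_pos η) ht h0 h1
  have hle : |wt t ξ - wt t η| ≤ t * (jb (ξ - η) * (jb (ξ - η) + jb η) ^ (t - 1)) := by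
    have hd := jb_abs_sub ξ η
    have hn := norm_le_jb (ξ - η)
    have hξ : jb ξ ≤ jb (ξ - η) + jb η := by
      have := jb_le_add ξ η; linarith
    rw [abs_le] at hd
    have hp := jb_pos (ξ - η)
    rcases le_total (jb ξ) (jb η) with h | h
    · have h2 := rpow_sub_le (jb_pos ξ) h ht
      have h3 : wt t ξ ≤ wt t η := Real.rpow_le_rpow (jb_pos ξ).le h (by linarith)
      rw [abs_of_nonpos (by linarith)]
      unfold wt
      calc _ ≤ t * (jb η - jb ξ) * jb η ^ (t - 1) := by linarith
        _ ≤ t * jb (ξ - η) * (jb (ξ - η) + jb η) ^ (t - 1) := by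
          have := Real.rpow_nonneg (jb_pos η).le (t - 1)
          have := (jb_pos η).le
          gcongr <;> linarith
        _ = _ := by ring
    · have h2 := rpow_sub_le (jb_pos η) h ht
      have h3 : wt t η ≤ wt t ξ := Real.rpow_le_rpow (jb_pos η).le h (by linarith)
      rw [abs_of_nonneg (by linarith)]
      unfold wt
      calc _ ≤ t * (jb ξ - jb η) * jb ξ ^ (t - 1) := by linarith
        _ ≤ t * jb (ξ - η) * (jb (ξ - η) + jb η) ^ (t - 1) := by
          have := Real.rpow_nonneg (jb_pos ξ).le (t - 1)
          have := (jb_pos ξ).le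
          gcongr <;> linarith
        _ = _ := by ring
  refine hle.trans ?_
  rw [mul_assoc]
  exact mul_le_mul_of_nonneg_left key (by linarith)

theorem kernel2 {d : ℕ} {t ε : ℝ} (ht : 1 ≤ t) (h0 : 0 ≤ ε) (h1 : ε ≤ 1) (ξ η : Euc d) :
    ‖ξ - η‖ * wt (t - 1) ξ ≤ 2 ^ (t - 1) * (wt t (ξ - η) + wt ε (ξ - η) * wt (t - ε) η) := by
  refine le_trans ?_ (kernel_aux (jb_pos (ξ - η)) (jb_pos η) ht h0 h1)
  have hξ : jb ξ ≤ jb (ξ - η) + jb η := by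
    have := jb_le_add ξ η; have hn := norm_le_jb (ξ - η); linarith
  have : wt (t - 1) ξ ≤ (jb (ξ - η) + jb η) ^ (t - 1) :=
    Real.rpow_le_rpow (jb_pos ξ).le hξ (by linarith)
  exact mul_le_mul (norm_le_jb _) this (wt_pos _ _).le (jb_pos _).le

theorem kernel3 {d : ℕ} {t : ℝ} (ht : 1 ≤ t) (ξ η : Euc d) :
    wt t ξ ≤ 2 ^ t * (wt t (ξ - η) + ‖η‖ * wt (t - 1) η) := by
  have hξ := jb_le_add' ξ η
  have h2 : (0:ℝ) < 2 ^ t := Real.rpow_pos_of_pos two_pos _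
  have hn := norm_nonneg η
  have hB : 0 ≤ ‖η‖ * wt (t - 1) η := mul_nonneg hn (wt_pos _ _).le
  have hA := (wt_pos t (ξ - η))
  have ht0 : 0 ≤ t := by linarith
  rcases le_total ‖η‖ (jb (ξ - η)) with h | h
  · calc wt t ξ ≤ (2 * jb (ξ - η)) ^ t := Real.rpow_le_rpow (jb_pos ξ).le (by linarith) ht0
      _ = 2 ^ t * wt t (ξ - η) := Real.mul_rpow two_pos.le (jb_pos _).le
      _ ≤ _ := by gcongr; linarith
  · calc wt t ξ ≤ (2 * ‖η‖) ^ t := Real.rpow_le_rpow (jb_pos ξ).le (by linarith) ht0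
      _ = 2 ^ t * ‖η‖ ^ t := Real.mul_rpow two_pos.le hn
      _ = 2 ^ t * (‖η‖ * ‖η‖ ^ (t - 1)) := by
          rw [← Real.rpow_one_add' hn (by linarith)]; congr 2; ring
      _ ≤ 2 ^ t * (‖η‖ * wt (t - 1) η) := by
          have : ‖η‖ ^ (t - 1) ≤ wt (t - 1) η :=
            Real.rpow_le_rpow hn (norm_le_jb η) (by linarith)
          gcongr
      _ ≤ _ := by gcongr; linarith

/-- pointwise interpolation -/
theorem wt_interp {d : ℕ} {t ε κ : ℝ} (hε : 0 < ε) (ht : ε ≤ t) (hκ : 0 < κ) (ξ : Euc d) :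
    wt (t - ε) ξ ≤ κ * wt t ξ + (κ⁻¹ ^ ε⁻¹) ^ (t - ε) := by
  have hp := jb_pos ξ
  rcases le_total κ⁻¹ (wt ε ξ) with h | h
  · have e : wt t ξ = wt (t - ε) ξ * wt ε ξ := by rw [← wt_add]; congr 1; ring
    have h2 : 1 ≤ κ * wt ε ξ := by
      calc 1 = κ * κ⁻¹ := by field_simp
        _ ≤ _ := by gcongr
    have h3 := wt_pos (t - ε) ξ
    have h4 : 0 ≤ (κ⁻¹ ^ ε⁻¹) ^ (t - ε) := by positivity
    rw [e]; nlinarith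
  · have h1 : jb ξ ≤ κ⁻¹ ^ ε⁻¹ := by
      have := Real.rpow_le_rpow (wt_pos ε ξ).le h (inv_pos.2 hε).le
      unfold wt at this
      rwa [← Real.rpow_mul hp.le, mul_inv_cancel₀ hε.ne', Real.rpow_one] at this
    have h2 : wt (t - ε) ξ ≤ (κ⁻¹ ^ ε⁻¹) ^ (t - ε) := Real.rpow_le_rpow hp.le h1 (by linarith)
    have := mul_pos hκ (wt_pos t ξ)
    linarith

/-- L2 norm of an extended nonnegative function. -/
def L2 {d : ℕ} (f : Euc d → ℝ≥0∞) : ℝ≥0∞ := (∫⁻ ξ, f ξ ^ (2:ℝ)) ^ (1 / (2:ℝ))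

theorem L2_sq {d : ℕ} (f : Euc d → ℝ≥0∞) : L2 f ^ (2:ℝ) = ∫⁻ ξ, f ξ ^ (2:ℝ) := by
  unfold L2
  rw [← ENNReal.rpow_mul]; norm_num

theorem L2_mono {d : ℕ} {f g : Euc d → ℝ≥0∞} (h : ∀ ξ, f ξ ≤ g ξ) : L2 f ≤ L2 g := by
  unfold L2
  gcongr with ξ
  exact h ξ

theorem L2_add_le {d : ℕ} {f g : Euc d → ℝ≥0∞} (hf : AEMeasurable f) (hg : AEMeasurable g) :
    L2 (fun ξ => f ξ + g ξ) ≤ L2 f + L2 g :=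
  ENNReal.lintegral_Lp_add_le hf hg (by norm_num)

theorem L2_const_mul {d : ℕ} {f : Euc d → ℝ≥0∞} (hf : AEMeasurable f) (c : ℝ≥0∞) :
    L2 (fun ξ => c * f ξ) = c * L2 f := by
  unfold L2
  simp_rw [ENNReal.mul_rpow_of_nonneg _ _ (two_pos.le : (0:ℝ) ≤ 2)]
  rw [lintegral_const_mul'' _ (hf.pow_const _), ENNReal.mul_rpow_of_nonneg _ _ (by norm_num),
    ← ENNReal.rpow_mul]
  norm_num

theorem L2_const_mul_le {d : ℕ} {f g : Euc d → ℝ≥0∞} (hf : AEMeasurable f) (c : ℝ≥0∞)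
    (h : ∀ ξ, g ξ ≤ c * f ξ) : L2 g ≤ c * L2 f :=
  (L2_mono h).trans (L2_const_mul hf c).le

theorem L2_sum_le {d : ℕ} {ι : Type*} (s : Finset ι) {f : ι → Euc d → ℝ≥0∞}
    (hf : ∀ i, AEMeasurable (f i)) : L2 (fun ξ => ∑ i ∈ s, f i ξ) ≤ ∑ i ∈ s, L2 (f i) := by
  classical
  induction s using Finset.induction_on with
  | empty => simp [L2]
  | insert a s ha ih =>
    simp only [Finset.sum_insert ha]
    refine (L2_add_le (hf a) ?_).trans (by gcongr)
    exact Finset.aemeasurable_fun_sum _ (fun i _ => hf i)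

theorem CS {d : ℕ} {f g : Euc d → ℝ≥0∞} (hf : AEMeasurable f) (hg : AEMeasurable g) :
    ∫⁻ ξ, f ξ * g ξ ≤ L2 f * L2 g := by
  have := ENNReal.lintegral_mul_le_Lp_mul_Lq volume (p := 2) (q := 2) (by constructor <;> norm_num) hf hg
  exact this

theorem young {d : ℕ} {a b : Euc d → ℝ≥0∞} (ha : Measurable a) (hb : Measurable b) :
    L2 (fun ξ => ∫⁻ η, a (ξ - η) * b η) ≤ (∫⁻ ξ, a ξ) * L2 b := by
  have hsq : ∀ ξ, (∫⁻ η, a (ξ - η) * b η) ^ (2:ℝ) ≤ (∫⁻ η, a η) * ∫⁻ η, a (ξ - η) * b η ^ (2:ℝ) := by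
    intro ξ
    have ham : Measurable (fun η => a (ξ - η)) := ha.comp (by fun_prop)
    have h1 : ∫⁻ η, a (ξ - η) * b η ≤ L2 (fun η => a (ξ - η) ^ (1 / (2:ℝ))) * L2 (fun η => a (ξ - η) ^ (1 / (2:ℝ)) * b η) := by
      refine le_trans (le_of_eq ?_) (CS (ham.pow_const _).aemeasurable ((ham.pow_const _).mul hb).aemeasurable)
      refine lintegral_congr fun η => ?_
      rw [← mul_assoc, ← ENNReal.rpow_add_of_nonneg _ _ (by norm_num) (by norm_num)]
      norm_num
    have h2 := ENNReal.rpow_le_rpow h1 (two_pos.le : (0:ℝ) ≤ 2)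
    refine h2.trans (le_of_eq ?_)
    rw [ENNReal.mul_rpow_of_nonneg _ _ (by norm_num), L2_sq, L2_sq]
    congr 1
    · simp_rw [← ENNReal.rpow_mul]
      norm_num
      exact lintegral_sub_left_eq_self a ξ
    · refine lintegral_congr fun η => ?_
      rw [ENNReal.mul_rpow_of_nonneg _ _ (by norm_num), ← ENNReal.rpow_mul]
      norm_num
  have hm : Measurable (fun p : Euc d × Euc d => a (p.1 - p.2) * b p.2 ^ (2:ℝ)) :=
    (ha.comp (measurable_fst.sub measurable_snd)).mul ((hb.comp measurable_snd).pow_const _)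
  have hI : ∫⁻ ξ, (∫⁻ η, a (ξ - η) * b η) ^ (2:ℝ) ≤ (∫⁻ ξ, a ξ) ^ (2:ℝ) * ∫⁻ η, b η ^ (2:ℝ) := by
    calc _ ≤ ∫⁻ ξ, (∫⁻ η, a η) * ∫⁻ η, a (ξ - η) * b η ^ (2:ℝ) := lintegral_mono hsq
      _ = (∫⁻ η, a η) * ∫⁻ ξ, ∫⁻ η, a (ξ - η) * b η ^ (2:ℝ) := by
          rw [lintegral_const_mul]
          exact hm.lintegral_prod_right'
      _ = (∫⁻ η, a η) * ∫⁻ η, ∫⁻ ξ, a (ξ - η) * b η ^ (2:ℝ) := by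
          rw [lintegral_lintegral_swap hm.aemeasurable]
      _ = (∫⁻ η, a η) * ∫⁻ η, (∫⁻ ξ, a ξ) * b η ^ (2:ℝ) := by
          congr 1
          refine lintegral_congr fun η => ?_
          have ham : Measurable (fun ξ => a (ξ - η)) := ha.comp (by fun_prop)
          rw [lintegral_mul_const _ ham, lintegral_sub_right_eq_self a η]
      _ = _ := by
          rw [lintegral_const_mul _ (hb.pow_const _), ← mul_assoc]
          congr 1
          rw [ENNReal.rpow_two, sq]
  unfold L2
  refine (ENNReal.rpow_le_rpow hI (by norm_num)).trans (le_of_eq ?_)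
  rw [ENNReal.mul_rpow_of_nonneg _ _ (by norm_num), ← ENNReal.rpow_mul]
  norm_num

theorem young' {d : ℕ} {a b : Euc d → ℝ≥0∞} (ha : Measurable a) (hb : Measurable b) :
    L2 (fun ξ => ∫⁻ η, a (ξ - η) * b η) ≤ L2 a * ∫⁻ ξ, b ξ := by
  rw [mul_comm]
  refine le_trans (le_of_eq ?_) (young hb ha)
  congr 1
  funext ξ
  rw [← lintegral_sub_left_eq_self _ ξ]
  refine lintegral_congr fun η => ?_
  rw [sub_sub_cancel, mul_comm]

/-- extended weight -/
def ew {d : ℕ} (t : ℝ) (ξ : Euc d) : ℝ≥0∞ := ENNReal.ofReal (wt t ξ)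

theorem measurable_ew {d : ℕ} (t : ℝ) : Measurable (ew t : Euc d → ℝ≥0∞) :=
  (continuous_wt t).measurable.ennreal_ofReal

theorem ew_add {d : ℕ} (t u : ℝ) (ξ : Euc d) : ew (t + u) ξ = ew t ξ * ew u ξ := by
  unfold ew; rw [wt_add, ENNReal.ofReal_mul (wt_pos _ _).le]

theorem ew_zero {d : ℕ} (ξ : Euc d) : ew 0 ξ = 1 := by
  unfold ew; rw [wt_zero]; simp

theorem ew_mono {d : ℕ} {t u : ℝ} (h : t ≤ u) (ξ : Euc d) : ew t ξ ≤ ew u ξ :=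
  ENNReal.ofReal_le_ofReal (wt_mono h ξ)

/-- Sobolev type norm on the Fourier side -/
def eN {d : ℕ} (t : ℝ) (f : Euc d → ℝ≥0∞) : ℝ≥0∞ := L2 (fun ξ => ew t ξ * f ξ)

theorem eN_mono {d : ℕ} {t u : ℝ} (h : t ≤ u) (f : Euc d → ℝ≥0∞) : eN t f ≤ eN u f :=
  L2_mono fun ξ => by gcongr; exact ew_mono h ξ

theorem L2_ew_lt_top {d : ℕ} {σ : ℝ} (hσ : (d:ℝ) / 2 < σ) : L2 (fun ξ : Euc d => ew (-σ) ξ) < ∞ := by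
  unfold L2
  refine ENNReal.rpow_lt_top_of_nonneg (by norm_num) (ne_of_lt ?_)
  have hi : Integrable (fun ξ : Euc d => (1 + ‖ξ‖ ^ 2) ^ (-(2 * σ) / 2)) :=
    integrable_rpow_neg_one_add_norm_sq (by simp; linarith)
  refine lt_of_le_of_lt (le_of_eq ?_) hi.lintegral_lt_top
  refine lintegral_congr fun ξ => ?_
  unfold ew
  rw [ENNReal.ofReal_rpow_of_pos (wt_pos _ _)]
  congr 1
  have := wt_sq (-σ) ξ
  rw [Real.rpow_two, this]
  congr 1; ring

theorem embed {d : ℕ} {t ε : ℝ} (h : (d:ℝ) / 2 < t - ε) : ∃ C : ℝ≥0, ∀ f : Euc d → ℝ≥0∞,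
    Measurable f → ∫⁻ ξ, ew ε ξ * f ξ ≤ C * eN t f := by
  refine ⟨(L2 (fun ξ : Euc d => ew (-(t - ε)) ξ)).toNNReal, fun f hf => ?_⟩
  rw [ENNReal.coe_toNNReal (L2_ew_lt_top h).ne]
  refine le_trans (le_of_eq ?_) (CS (measurable_ew _).aemeasurable ((measurable_ew t).mul hf).aemeasurable)
  refine lintegral_congr fun ξ => ?_
  rw [← mul_assoc, ← ew_add]; congr 2; ring

theorem embed0 {d : ℕ} {t : ℝ} (h : (d:ℝ) / 2 < t) : ∃ C : ℝ≥0, ∀ f : Euc d → ℝ≥0∞,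
    Measurable f → ∫⁻ ξ, f ξ ≤ C * eN t f := by
  obtain ⟨C, hC⟩ := embed (t := t) (ε := 0) (by simpa using h)
  refine ⟨C, fun f hf => ?_⟩
  simpa [ew_zero] using hC f hf

/-- bilinear estimate -/
theorem bilin {d : ℕ} {t ε : ℝ} (h0 : 0 ≤ ε) (h : (d:ℝ) / 2 < t - ε) : ∃ C : ℝ≥0, ∀ a b : Euc d → ℝ≥0∞,
    Measurable a → Measurable b →
    L2 (fun ξ => ∫⁻ η, (ew t (ξ - η) + ew ε (ξ - η) * ew (t - ε) η) * (a (ξ - η) * b η))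
      ≤ C * eN t a * eN (t - ε) b := by
  obtain ⟨C1, h1⟩ := embed h
  obtain ⟨C2, h2⟩ := embed0 h
  refine ⟨C1 + C2, fun a b ha hb => ?_⟩
  have hm1 : Measurable (fun ξ => ew t ξ * a ξ) := (measurable_ew t).mul ha
  have hm2 : Measurable (fun ξ => ew ε ξ * a ξ) := (measurable_ew ε).mul ha
  have hm3 : Measurable (fun ξ => ew (t - ε) ξ * b ξ) := (measurable_ew _).mul hb
  have hs : Measurable (fun p : Euc d × Euc d => p.1 - p.2) := measurable_fst.sub measurable_snd
  have e : ∀ ξ, ∫⁻ η, (ew t (ξ - η) + ew ε (ξ - η) * ew (t - ε) η) * (a (ξ - η) * b η)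
      = (∫⁻ η, (fun ζ => ew t ζ * a ζ) (ξ - η) * b η) +
        ∫⁻ η, (fun ζ => ew ε ζ * a ζ) (ξ - η) * (fun ζ => ew (t - ε) ζ * b ζ) η := by
    intro ξ
    rw [← lintegral_add_left]
    · refine lintegral_congr fun η => ?_
      ring
    · exact (hm1.comp (measurable_const.sub measurable_id)).mul hb
  simp_rw [e]
  refine (L2_add_le ?_ ?_).trans ?_
  · exact (Measurable.lintegral_prod_right' (f := fun p : Euc d × Euc d => (fun ζ => ew t ζ * a ζ) (p.1 - p.2) * b p.2)
      ((hm1.comp hs).mul (hb.comp measurable_snd))).aemeasurable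
  · exact (Measurable.lintegral_prod_right' (f := fun p : Euc d × Euc d => (fun ζ => ew ε ζ * a ζ) (p.1 - p.2) * (fun ζ => ew (t - ε) ζ * b ζ) p.2)
      ((hm2.comp hs).mul (hm3.comp measurable_snd))).aemeasurable
  · refine (add_le_add (young' hm1 hb) (young hm2 hm3)).trans ?_
    calc _ ≤ eN t a * (C2 * eN (t - ε) b) + (C1 * eN t a) * eN (t - ε) b := by
          gcongr
          · exact le_rfl
          · exact h2 b hb
          · exact h1 a ha
          · exact le_rfl
      _ = _ := by push_cast; ring

section partC
variable {d : ℕ} {H : Type*} [NormedAddCommGroup H] [InnerProductSpace ℂ H] [CompleteSpace H]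

lemma fi_smul_flip {g : Euc d → ℂ} {Y : Euc d → H} (hg : Integrable g) (hY : Integrable Y) :
    ∫ ξ, (𝓕⁻ g ξ) • Y ξ = ∫ x, g x • (𝓕⁻ Y x) := by
  have h := VectorFourier.integral_fourierIntegral_smul_eq_flip (e := Real.fourierChar)
    (L := -innerₗ (Euc d)) (μ := volume) (ν := volume) (f := g) (g := Y)
    Real.continuous_fourierChar (by simp only [LinearMap.neg_apply, innerₗ_apply_apply]; fun_prop) hg hY
  have e : (-innerₗ (Euc d)).flip = -innerₗ (Euc d) := by
    ext x y; simp [real_inner_comm]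
  rw [e] at h
  exact h

lemma fi_continuous {Y : Euc d → H} (hY : Integrable Y) : Continuous (𝓕⁻ Y) :=
  VectorFourier.fourierIntegral_continuous Real.continuous_fourierChar
    (by simp only [LinearMap.neg_apply, innerₗ_apply_apply]; fun_prop) hY

lemma fi_ae {Y : Euc d → H} (hY : Integrable Y) (hY2 : MemLp Y 2) :
    (𝓕⁻ (hY2.toLp Y) : Lp (α := Euc d) H 2 volume) =ᵐ[volume] 𝓕⁻ Y := by
  apply ae_eq_of_integral_contDiff_smul_eq
  · exact (Lp.memLp _).locallyIntegrable (by norm_num)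
  · exact (fi_continuous hY).locallyIntegrable
  · intro g hg hgc
    set g' : Euc d → ℂ := Complex.ofRealCLM ∘ g with hg'
    have h1 : HasCompactSupport g' := hgc.comp_left (by simp)
    have h2 : ContDiff ℝ (⊤ : ℕ∞) g' := Complex.ofRealCLM.contDiff.comp hg
    set G := h1.toSchwartzMap h2
    have hG : ∀ x, G x = (g x : ℂ) := fun x => rfl
    have key := congrArg (fun T => T G) (Lp.fourierInv_toTemperedDistribution_eq (hY2.toLp Y))
    simp only [TemperedDistribution.fourierInv_apply, Lp.toTemperedDistribution_apply] at key
    have e1 : ∀ x, G x • (𝓕⁻ (hY2.toLp Y) : Lp (α := Euc d) H 2 volume) x = g x • (𝓕⁻ (hY2.toLp Y) : Lp (α := Euc d) H 2 volume) x := by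
      intro x; rw [hG]; simp
    simp only [e1] at key
    rw [← key]
    have e2 : ∫ x, (𝓕⁻ G) x • (hY2.toLp Y) x = ∫ x, (𝓕⁻ (G : Euc d → ℂ)) x • Y x := by
      apply integral_congr_ae
      filter_upwards [hY2.coeFn_toLp] with x hx
      rw [hx, SchwartzMap.fourierInv_coe]
    rw [e2, fi_smul_flip G.integrable hY]
    simp [hG]

lemma fi_memLp {Y : Euc d → H} (hY : Integrable Y) (hY2 : MemLp Y 2) : MemLp (𝓕⁻ Y) 2 :=
  (memLp_congr_ae (fi_ae hY hY2)).1 (Lp.memLp _)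

lemma fi_planch {Y : Euc d → H} (hY : Integrable Y) (hY2 : MemLp Y 2) :
    ∫ x, ‖𝓕⁻ Y x‖ ^ 2 = ∫ x, ‖Y x‖ ^ 2 := by
  have h : ‖(𝓕⁻ (hY2.toLp Y) : Lp (α := Euc d) H 2 volume)‖ = ‖hY2.toLp Y‖ := by
    rw [← Lp.norm_fourier_eq, FourierTransform.fourier_fourierInv_eq]
  have h2 := congrArg (fun x => ((x ^ 2 : ℝ) : ℂ)) h
  simp only [Complex.ofReal_pow] at h2
  have q : ∀ f : Lp (α := Euc d) H 2 volume, ((‖f‖ : ℂ)) ^ 2 = ((∫ x, ‖f x‖ ^ 2 : ℝ) : ℂ) := by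
    intro f
    have := inner_self_eq_norm_sq_to_K (𝕜 := ℂ) f
    rw [L2.inner_def] at this
    simp only [inner_self_eq_norm_sq_to_K] at this
    rw [← integral_complex_ofReal]
    push_cast
    exact this.symm
  rw [q, q] at h2
  have h3 : (∫ x, ‖(𝓕⁻ (hY2.toLp Y) : Lp (α := Euc d) H 2 volume) x‖ ^ 2) = ∫ x, ‖(hY2.toLp Y) x‖ ^ 2 := by
    exact_mod_cast h2
  have h4 : (∫ x, ‖(hY2.toLp Y) x‖ ^ 2) = ∫ x, ‖Y x‖ ^ 2 :=
    integral_congr_ae (hY2.coeFn_toLp.mono fun x hx => by simp only [hx])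
  have h5 : (∫ x, ‖(𝓕⁻ (hY2.toLp Y) : Lp (α := Euc d) H 2 volume) x‖ ^ 2) = ∫ x, ‖𝓕⁻ Y x‖ ^ 2 :=
    integral_congr_ae ((fi_ae hY hY2).mono fun x hx => by simp only [hx])
  rw [← h4, ← h5, h3]

lemma sesq {Y f : Euc d → H} (hY : Integrable Y) (hf : Integrable f) :
    ∫ ξ, inner ℂ (Y ξ) (𝓕 f ξ) = ∫ x, inner ℂ (𝓕⁻ Y x) (f x) := by
  have h := VectorFourier.integral_sesq_fourierIntegral_eq_neg_flip (e := Real.fourierChar)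
    (L := -innerₗ (Euc d)) (μ := volume) (ν := volume) (f := Y) (g := f) (innerSL ℂ)
    Real.continuous_fourierChar (by simp only [LinearMap.neg_apply, innerₗ_apply_apply]; fun_prop) hY hf
  have e : -(-innerₗ (Euc d)).flip = innerₗ (Euc d) := by
    ext x y; simp [real_inner_comm]
  rw [e] at h
  exact h.symm

lemma conv_fourier {m : Euc d → ℂ} {Y : Euc d → H} (hm : Integrable m) (hY : Integrable Y) (ξ : Euc d) :
    ∫ η, 𝓕 m (ξ - η) • Y η = 𝓕 (fun x => m x • 𝓕⁻ Y x) ξ := by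
  set g : Euc d → ℂ := fun x => Real.fourierChar (-(inner ℝ x ξ)) • m x with hgd
  have hg : Integrable g := by
    refine hm.norm.mono' ?_ ?_
    · apply AEStronglyMeasurable.smul _ hm.1
      fun_prop
    · filter_upwards with x
      simp [hgd]
  have e1 : ∀ η, 𝓕 m (ξ - η) = 𝓕⁻ g η := by
    intro η
    rw [Real.fourier_eq, Real.fourierInv_eq]
    congr 1; ext x
    simp only [hgd]
    rw [smul_smul, ← AddChar.map_add_eq_mul]
    congr 2
    rw [inner_sub_right]; ring
  simp_rw [e1]
  rw [fi_smul_flip hg hY, Real.fourier_eq]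
  congr 1; ext x
  simp only [hgd]
  rw [smul_assoc]

lemma coer {m : Euc d → ℂ} {b : ℝ} {p : Euc d → ℝ} {Y : Euc d → H} (hm : Integrable m)
    (hmc : Continuous m) {K : ℝ} (hK : ∀ x, ‖m x‖ ≤ K)
    (hp : ∀ x, 1 + m x = p x) (hb : ∀ x, b ≤ p x) (hY : Integrable Y) (hY2 : MemLp Y 2) :
    b * ∫ ξ, ‖Y ξ‖ ^ 2 ≤ (∫ ξ, inner ℂ (Y ξ) (Y ξ + ∫ η, 𝓕 m (ξ - η) • Y η)).re := by
  have hy := fi_memLp hY hY2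
  have hyc := fi_continuous hY
  have hyb : ∀ x, ‖𝓕⁻ Y x‖ ≤ ∫ ξ, ‖Y ξ‖ := fun x =>
    VectorFourier.norm_fourierIntegral_le_integral_norm _ _ _ _ _
  have hf : Integrable (fun x => m x • 𝓕⁻ Y x) := by
    refine (hm.norm.mul_const (∫ ξ, ‖Y ξ‖)).mono' (hmc.smul hyc).aestronglyMeasurable ?_
    filter_upwards with x
    rw [norm_smul]
    exact mul_le_mul_of_nonneg_left (hyb x) (norm_nonneg _)
  simp_rw [conv_fourier hm hY, inner_add_right]
  have hFc : Continuous (𝓕 (fun x => m x • 𝓕⁻ Y x)) :=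
    VectorFourier.fourierIntegral_continuous Real.continuous_fourierChar
      (by simp only [innerₗ_apply_apply]; fun_prop) hf
  have hFb : ∀ x, ‖𝓕 (fun x => m x • 𝓕⁻ Y x) x‖ ≤ ∫ ξ, ‖m ξ • 𝓕⁻ Y ξ‖ := fun x =>
    VectorFourier.norm_fourierIntegral_le_integral_norm _ _ _ _ _
  have n2 : ∀ {f : Euc d → H}, MemLp f 2 → Integrable (fun x => ‖f x‖ ^ 2) := fun hf =>
    hf.integrable_norm_pow (by norm_num)
  have i1 : Integrable (fun ξ => inner ℂ (Y ξ) (Y ξ)) := by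
    refine (n2 hY2).mono' (hY.1.inner hY.1) ?_
    filter_upwards with x
    exact (norm_inner_le_norm _ _).trans_eq (by ring)
  have i2 : Integrable (fun ξ => inner ℂ (Y ξ) (𝓕 (fun x => m x • 𝓕⁻ Y x) ξ)) := by
    refine (hY.norm.mul_const (∫ ξ, ‖m ξ • 𝓕⁻ Y ξ‖)).mono' (hY.1.inner hFc.aestronglyMeasurable) ?_
    filter_upwards with x
    exact (norm_inner_le_norm _ _).trans (mul_le_mul_of_nonneg_left (hFb x) (norm_nonneg _))
  rw [integral_add i1 i2, sesq hY hf]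
  have e1 : ∫ ξ, inner ℂ (Y ξ) (Y ξ) = ((∫ x, ‖𝓕⁻ Y x‖ ^ 2 : ℝ) : ℂ) := by
    rw [fi_planch hY hY2, ← integral_complex_ofReal]
    simp only [inner_self_eq_norm_sq_to_K]
    push_cast
    rfl
  have e2 : ∀ x, inner ℂ (𝓕⁻ Y x) (m x • 𝓕⁻ Y x) = (((p x - 1) * ‖𝓕⁻ Y x‖ ^ 2 : ℝ) : ℂ) := by
    intro x
    rw [inner_smul_right, inner_self_eq_norm_sq_to_K]
    have : m x = p x - 1 := by rw [← hp]; ring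
    rw [this]; push_cast; rfl
  simp only [e2]
  rw [e1, integral_complex_ofReal, ← Complex.ofReal_add, Complex.ofReal_re, ← fi_planch hY hY2]
  have hpm : ∀ x, ‖p x - 1‖ ≤ K := by
    intro x
    have : m x = ((p x - 1 : ℝ) : ℂ) := by push_cast; rw [← hp]; ring
    rw [← Complex.norm_real, ← this]; exact hK x
  have hpc : Continuous p := by
    have : p = fun x => (1 + m x).re := by ext x; rw [hp]; simp
    rw [this]; fun_prop
  have i3 : Integrable (fun x => (p x - 1) * ‖𝓕⁻ Y x‖ ^ 2) := by
    refine ((n2 hy).const_mul K).mono' (by fun_prop) ?_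
    filter_upwards with x
    rw [norm_mul, norm_pow, norm_norm]
    exact mul_le_mul_of_nonneg_right (hpm x) (by positivity)
  rw [← integral_add (n2 hy) i3, ← integral_const_mul]
  apply integral_mono ((n2 hy).const_mul b) ((n2 hy).add i3)
  intro x
  have := mul_le_mul_of_nonneg_right (hb x) (sq_nonneg ‖𝓕⁻ Y x‖)
  simp only [Pi.add_apply]
  linarith
end partC

section partD
variable {d : ℕ} {H : Type*} [NormedAddCommGroup H] [InnerProductSpace ℂ H] [CompleteSpace H]
  [MeasurableSpace H] [BorelSpace H] [SecondCountableTopology H]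

theorem absorb {t ε : ℝ} (hε : 0 < ε) (ht : ε ≤ t) (c : ℝ≥0) : ∃ K : ℝ≥0, ∀ (f : Euc d → ℝ≥0∞)
    (X : ℝ≥0∞), Measurable f → eN t f < ∞ → eN t f ≤ c * eN (t - ε) f + X →
    eN t f ≤ K * eN 0 f + 2 * X := by
  set κ : ℝ := 1 / (2 * (c + 1)) with hκ
  have hκp : 0 < κ := by positivity
  set D : ℝ := (κ⁻¹ ^ ε⁻¹) ^ (t - ε) with hD
  have hDp : 0 ≤ D := by positivity
  refine ⟨2 * c * D.toNNReal, fun f X hf hfin h => ?_⟩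
  have h1 : eN (t - ε) f ≤ ENNReal.ofReal κ * eN t f + ENNReal.ofReal D * eN 0 f := by
    unfold eN
    have q : ∀ u, AEMeasurable (fun ξ : Euc d => ew u ξ * f ξ) := fun u =>
      ((measurable_ew u).mul hf).aemeasurable
    rw [← L2_const_mul (q t), ← L2_const_mul (q 0)]
    refine le_trans (L2_mono fun ξ => ?_) (L2_add_le (by have := measurable_ew (d := d) t; fun_prop)
      (by have := measurable_ew (d := d) 0; fun_prop))
    rw [← mul_assoc, ← mul_assoc, ← add_mul]
    gcongr
    rw [ew_zero, mul_one]
    unfold ew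
    rw [← ENNReal.ofReal_mul hκp.le, ← ENNReal.ofReal_add (mul_nonneg hκp.le (wt_pos _ _).le) hDp]
    exact ENNReal.ofReal_le_ofReal (wt_interp hε ht hκp ξ)
  have hc : (c : ℝ≥0∞) * ENNReal.ofReal κ ≤ 2⁻¹ := by
    have : ((2:ℝ≥0∞))⁻¹ = ENNReal.ofReal (2⁻¹) := by
      rw [ENNReal.ofReal_inv_of_pos (by norm_num)]; norm_num
    rw [this, ← ENNReal.ofReal_coe_nnreal, ← ENNReal.ofReal_mul c.coe_nonneg]
    apply ENNReal.ofReal_le_ofReal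
    rw [hκ, mul_one_div, div_le_iff₀ (by positivity)]
    nlinarith [c.2]
  have h2 : eN t f ≤ 2⁻¹ * eN t f + (c * (ENNReal.ofReal D * eN 0 f) + X) := by
    calc eN t f ≤ c * (ENNReal.ofReal κ * eN t f + ENNReal.ofReal D * eN 0 f) + X := h.trans (by gcongr)
      _ = (c * ENNReal.ofReal κ) * eN t f + (c * (ENNReal.ofReal D * eN 0 f) + X) := by ring
      _ ≤ _ := by gcongr
  have h3 : 2 * eN t f ≤ eN t f + 2 * (c * (ENNReal.ofReal D * eN 0 f) + X) := by
    calc 2 * eN t f ≤ 2 * (2⁻¹ * eN t f + (c * (ENNReal.ofReal D * eN 0 f) + X)) := by gcongr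
      _ = _ := by rw [mul_add, ← mul_assoc, ENNReal.mul_inv_cancel (by norm_num) (by norm_num), one_mul]
  rw [two_mul, ENNReal.add_le_add_iff_left hfin.ne] at h3
  refine h3.trans (le_of_eq ?_)
  push_cast
  simp only [ENNReal.ofReal]
  ring

structure Setup (m : Euc d → ℂ) (b : ℝ) (Z W : Euc d → H) : Prop where
  hm : Integrable m
  hmc : Continuous m
  hK : ∃ K, ∀ x, ‖m x‖ ≤ K
  hp : ∃ p : Euc d → ℝ, (∀ x, 1 + m x = p x) ∧ ∀ x, b ≤ p x
  hb : 0 < b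
  hZ : Measurable Z
  hW : Measurable W
  hZ1 : ∀ t, Integrable (fun ξ => wt t ξ • Z ξ)
  hZ2 : ∀ t, MemLp (fun ξ => wt t ξ • Z ξ) 2
  hW1 : Integrable W
  orth : ∀ ξ, inner ℂ (Z ξ) (Z ξ + ∫ η, 𝓕 m (ξ - η) • (Z η + W η)) = 0

theorem fourier_cont {m : Euc d → ℂ} (hm : Integrable m) : Continuous (𝓕 m) :=
  VectorFourier.fourierIntegral_continuous Real.continuous_fourierChar
      (by simp only [innerₗ_apply_apply]; fun_prop) hm

theorem enorm_wt_smul (t : ℝ) (ξ : Euc d) (z : H) : ‖wt t ξ • z‖ₑ = ew t ξ * ‖z‖ₑ := by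
  rw [enorm_smul, ew, Real.enorm_of_nonneg (wt_pos _ _).le]

theorem Setup.conv_int {m : Euc d → ℂ} {b : ℝ} {Z W : Euc d → H} (h : Setup m b Z W) {Y : Euc d → H} (hY : Integrable Y)
    (ξ : Euc d) : Integrable (fun η => 𝓕 m (ξ - η) • Y η) := by
  refine (hY.norm.const_mul (∫ x, ‖m x‖)).mono' ?_ ?_
  · exact ((fourier_cont h.hm).comp (by fun_prop)).aestronglyMeasurable.smul hY.1
  · filter_upwards with η
    rw [norm_smul]
    gcongr
    exact VectorFourier.norm_fourierIntegral_le_integral_norm _ _ _ _ _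

theorem Setup.energy {m : Euc d → ℂ} {b : ℝ} {Z W : Euc d → H} (h : Setup m b Z W) (t : ℝ) :
    eN t (fun ξ => ‖Z ξ‖ₑ) ≤ ENNReal.ofReal b⁻¹ * L2 (fun ξ => ∫⁻ η, ‖𝓕 m (ξ - η)‖ₑ *
      (ENNReal.ofReal |wt t ξ - wt t η| * ‖Z η‖ₑ + ew t ξ * ‖W η‖ₑ)) := by
  obtain ⟨K, hK⟩ := h.hK
  obtain ⟨p, hp, hpb⟩ := h.hp
  set Y : Euc d → H := fun ξ => wt t ξ • Z ξ with hYd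
  have hY1 := h.hZ1 t
  have hY2 := h.hZ2 t
  have hZi : Integrable Z := by simpa [wt_zero] using h.hZ1 0
  have hYm : Measurable Y := by
    have := (continuous_wt (d := d) t).measurable
    have := h.hZ
    fun_prop
  set R : Euc d → H := fun ξ => ∫ η, 𝓕 m (ξ - η) • ((wt t ξ - wt t η) • Z η + wt t ξ • W η) with hR
  have eR : ∀ ξ, wt t ξ • (∫ η, 𝓕 m (ξ - η) • (Z η + W η)) - ∫ η, 𝓕 m (ξ - η) • Y η = R ξ := by
    intro ξ
    have j1 : Integrable (fun η => wt t ξ • 𝓕 m (ξ - η) • (Z η + W η)) :=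
      (h.conv_int (hZi.add h.hW1) ξ).smul (wt t ξ)
    have j2 : Integrable (fun η => 𝓕 m (ξ - η) • Y η) := h.conv_int hY1 ξ
    rw [← integral_smul, ← integral_sub j1 j2]
    congr 1; ext η
    simp only [hYd]
    rw [smul_comm, ← smul_sub]
    congr 1
    module
  have eo : ∀ ξ, inner ℂ (Y ξ) (Y ξ + ∫ η, 𝓕 m (ξ - η) • Y η) = - inner ℂ (Y ξ) (R ξ) := by
    intro ξ
    have : Y ξ + (∫ η, 𝓕 m (ξ - η) • Y η) = wt t ξ • (Z ξ + ∫ η, 𝓕 m (ξ - η) • (Z η + W η)) - R ξ := by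
      rw [← eR, smul_add]; simp only [hYd]; abel
    have o : inner ℂ (Y ξ) (wt t ξ • (Z ξ + ∫ η, 𝓕 m (ξ - η) • (Z η + W η))) = 0 := by
      simp only [hYd]
      rw [← algebraMap_smul ℂ (wt t ξ) (Z ξ + _), inner_smul_right, ← algebraMap_smul ℂ (wt t ξ) (Z ξ),
        inner_smul_left, h.orth]
      simp
    rw [this, inner_sub_right, o, zero_sub]
  set R' : Euc d → ℝ≥0∞ := fun ξ => ∫⁻ η, ‖𝓕 m (ξ - η)‖ₑ *
      (ENNReal.ofReal |wt t ξ - wt t η| * ‖Z η‖ₑ + ew t ξ * ‖W η‖ₑ) with hR'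
  have hR'm : Measurable R' := by
    have := (continuous_wt (d := d) t).measurable
    have := measurable_ew (d := d) t
    have := h.hZ
    have := h.hW
    have := (fourier_cont h.hm).measurable
    apply Measurable.lintegral_prod_right'
      (f := fun q : Euc d × Euc d => ‖𝓕 m (q.1 - q.2)‖ₑ *
      (ENNReal.ofReal |wt t q.1 - wt t q.2| * ‖Z q.2‖ₑ + ew t q.1 * ‖W q.2‖ₑ))
    fun_prop
  have hRR : ∀ ξ, ‖R ξ‖ₑ ≤ R' ξ := by
    intro ξ
    refine (enorm_integral_le_lintegral_enorm _).trans (lintegral_mono fun η => ?_)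
    rw [enorm_smul]
    gcongr
    refine (enorm_add_le _ _).trans ?_
    rw [enorm_wt_smul, enorm_smul, Real.enorm_eq_ofReal_abs]
  have hc : b * ∫ ξ, ‖Y ξ‖ ^ 2 ≤ _ := coer h.hm h.hmc hK hp hpb hY1 hY2
  simp only [eo] at hc
  have hL : L2 (fun ξ => ‖Y ξ‖ₑ) < ∞ := by
    have := hY2.2
    rw [eLpNorm_eq_lintegral_rpow_enorm_toReal (by norm_num) (by norm_num)] at this
    simpa [L2] using this
  have e1 : ENNReal.ofReal (∫ ξ, ‖Y ξ‖ ^ 2) = L2 (fun ξ => ‖Y ξ‖ₑ) * L2 (fun ξ => ‖Y ξ‖ₑ) := by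
    have : L2 (fun ξ => ‖Y ξ‖ₑ) * L2 (fun ξ => ‖Y ξ‖ₑ) = L2 (fun ξ => ‖Y ξ‖ₑ) ^ (2:ℝ) := by
      rw [ENNReal.rpow_two, sq]
    rw [this, L2_sq, ofReal_integral_eq_lintegral_ofReal (hY2.integrable_norm_pow (by norm_num))
      (Filter.Eventually.of_forall fun x => by positivity)]
    congr 1; ext ξ
    rw [ENNReal.rpow_two, ENNReal.ofReal_pow (norm_nonneg _), ofReal_norm]
  have e2 : ENNReal.ofReal b * (L2 (fun ξ => ‖Y ξ‖ₑ) * L2 (fun ξ => ‖Y ξ‖ₑ)) ≤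
      L2 (fun ξ => ‖Y ξ‖ₑ) * L2 R' := by
    rw [← e1, ← ENNReal.ofReal_mul h.hb.le]
    refine (ENNReal.ofReal_le_ofReal (hc.trans (Complex.re_le_norm _))).trans ?_
    rw [ofReal_norm]
    refine (enorm_integral_le_lintegral_enorm _).trans ?_
    refine le_trans (lintegral_mono fun ξ => ?_) (CS hYm.enorm.aemeasurable hR'm.aemeasurable)
    rw [enorm_neg]
    refine le_trans ?_ (mul_le_mul_right (hRR ξ) _)
    rw [← ofReal_norm, ← ofReal_norm, ← ofReal_norm, ← ENNReal.ofReal_mul (norm_nonneg _)]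
    exact ENNReal.ofReal_le_ofReal (norm_inner_le_norm _ _)
  have e3 : eN t (fun ξ => ‖Z ξ‖ₑ) = L2 (fun ξ => ‖Y ξ‖ₑ) := by
    unfold eN; congr 1; ext ξ; rw [← enorm_wt_smul]
  rw [e3]
  set y := L2 (fun ξ => ‖Y ξ‖ₑ)
  rcases eq_or_ne y 0 with h0 | h0
  · rw [h0]; exact zero_le
  have hb0 : ENNReal.ofReal b ≠ 0 := by simpa using h.hb
  have e4 : ENNReal.ofReal b * y ≤ L2 R' := by
    have : y * (ENNReal.ofReal b * y) ≤ y * L2 R' := by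
      refine le_trans (le_of_eq ?_) e2; ring
    exact (ENNReal.mul_le_mul_iff_right h0 hL.ne).1 this
  rw [ENNReal.ofReal_inv_of_pos h.hb]
  calc y = (ENNReal.ofReal b)⁻¹ * (ENNReal.ofReal b * y) := by
        rw [← mul_assoc, ENNReal.inv_mul_cancel hb0 ENNReal.ofReal_ne_top, one_mul]
    _ ≤ _ := by gcongr

theorem Setup.energy0 {m : Euc d → ℂ} {b : ℝ} {Z W : Euc d → H} (h : Setup m b Z W) :
    eN 0 (fun ξ => ‖Z ξ‖ₑ) ≤ ENNReal.ofReal b⁻¹ * (eN 0 (fun ξ => ‖𝓕 m ξ‖ₑ) * ∫⁻ ξ, ‖W ξ‖ₑ) := by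
  refine (h.energy 0).trans ?_
  gcongr
  simp only [eN, wt_zero, ew_zero]
  simp only [sub_self, abs_zero, ENNReal.ofReal_zero, zero_mul, zero_add, one_mul]
  exact young' (fourier_cont h.hm).measurable.enorm h.hW.enorm

theorem energyT {t ε : ℝ} (ht : 1 ≤ t) (h0 : 0 ≤ ε) (h1 : ε ≤ 1) (hd : (d:ℝ) / 2 < t - ε) :
    ∃ C : ℝ≥0, ∀ (m : Euc d → ℂ) (b : ℝ) (Z W : Euc d → H), Setup m b Z W →
    eN t (fun ξ => ‖Z ξ‖ₑ) ≤ ENNReal.ofReal b⁻¹ * (C * (eN t (fun ξ => ‖𝓕 m ξ‖ₑ) *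
      (eN (t - ε) (fun ξ => ‖Z ξ‖ₑ) + ∫⁻ ξ, ‖W ξ‖ₑ) +
      (∫⁻ ξ, ‖𝓕 m ξ‖ₑ) * L2 (fun ξ => ‖ξ‖ₑ * ew (t - 1) ξ * ‖W ξ‖ₑ))) := by
  obtain ⟨C, hC⟩ := bilin (d := d) h0 hd
  set k1 : ℝ≥0 := (t * 2 ^ (t - 1)).toNNReal with hk1
  set k3 : ℝ≥0 := ((2:ℝ) ^ t).toNNReal with hk3
  refine ⟨k1 * C + k3, fun m b Z W h => (h.energy t).trans ?_⟩
  gcongr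
  have mw := (continuous_wt (d := d) t).measurable
  have me := fun t => measurable_ew (d := d) t
  have mZ := h.hZ
  have mW := h.hW
  have mM := (fourier_cont h.hm).measurable
  set M : Euc d → ℝ≥0∞ := fun ξ => ‖𝓕 m ξ‖ₑ with hM
  have mM' : Measurable M := mM.enorm
  set A : Euc d → ℝ≥0∞ := fun ξ => ∫⁻ η, (ew t (ξ - η) + ew ε (ξ - η) * ew (t - ε) η) * (M (ξ - η) * ‖Z η‖ₑ)
  set B1 : Euc d → ℝ≥0∞ := fun ξ => ∫⁻ η, (ew t (ξ - η) * M (ξ - η)) * ‖W η‖ₑ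
  set B2 : Euc d → ℝ≥0∞ := fun ξ => ∫⁻ η, M (ξ - η) * (‖η‖ₑ * ew (t - 1) η * ‖W η‖ₑ)
  have hA : Measurable A := by
    apply Measurable.lintegral_prod_right' (f := fun q : Euc d × Euc d =>
      (ew t (q.1 - q.2) + ew ε (q.1 - q.2) * ew (t - ε) q.2) * (M (q.1 - q.2) * ‖Z q.2‖ₑ))
    fun_prop
  have hB1 : Measurable B1 := by
    apply Measurable.lintegral_prod_right' (f := fun q : Euc d × Euc d =>
      (ew t (q.1 - q.2) * M (q.1 - q.2)) * ‖W q.2‖ₑ)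
    fun_prop
  have hB2 : Measurable B2 := by
    apply Measurable.lintegral_prod_right' (f := fun q : Euc d × Euc d =>
      M (q.1 - q.2) * (‖q.2‖ₑ * ew (t - 1) q.2 * ‖W q.2‖ₑ))
    fun_prop
  have lA : L2 A ≤ C * eN t M * eN (t - ε) (fun ξ => ‖Z ξ‖ₑ) := hC _ _ mM' mZ.enorm
  have lB1 : L2 B1 ≤ eN t M * ∫⁻ ξ, ‖W ξ‖ₑ :=
    young' (a := fun ξ => ew t ξ * M ξ) (by fun_prop) mW.enorm
  have lB2 : L2 B2 ≤ (∫⁻ ξ, M ξ) * L2 (fun ξ => ‖ξ‖ₑ * ew (t - 1) ξ * ‖W ξ‖ₑ) :=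
    young (b := fun ξ => ‖ξ‖ₑ * ew (t - 1) ξ * ‖W ξ‖ₑ) mM' (by fun_prop)
  have pt : ∀ ξ, (∫⁻ η, M (ξ - η) * (ENNReal.ofReal |wt t ξ - wt t η| * ‖Z η‖ₑ + ew t ξ * ‖W η‖ₑ))
      ≤ k1 * A ξ + k3 * (B1 ξ + B2 ξ) := by
    intro ξ
    rw [← lintegral_add_left (by fun_prop), ← lintegral_const_mul _ (by fun_prop),
      ← lintegral_const_mul _ (by fun_prop), ← lintegral_add_left (by fun_prop)]
    refine lintegral_mono fun η => ?_
    have q1 : ENNReal.ofReal |wt t ξ - wt t η| ≤ k1 * (ew t (ξ - η) + ew ε (ξ - η) * ew (t - ε) η) := by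
      refine (ENNReal.ofReal_le_ofReal (kernel1 ht h0 h1 ξ η)).trans (le_of_eq ?_)
      have w1 := (wt_pos t (ξ - η)).le
      have w2 := (wt_pos ε (ξ - η)).le
      have w3 := (wt_pos (t - ε) η).le
      rw [ENNReal.ofReal_mul (by positivity), ENNReal.ofReal_add w1 (mul_nonneg w2 w3), ENNReal.ofReal_mul w2]
      rfl
    have q3 : ew t ξ ≤ k3 * (ew t (ξ - η) + ‖η‖ₑ * ew (t - 1) η) := by
      refine (ENNReal.ofReal_le_ofReal (kernel3 ht ξ η)).trans (le_of_eq ?_)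
      have w1 := (wt_pos t (ξ - η)).le
      have w3 := (wt_pos (t - 1) η).le
      rw [ENNReal.ofReal_mul (by positivity), ENNReal.ofReal_add w1 (by positivity),
        ENNReal.ofReal_mul (norm_nonneg _), ofReal_norm]
      rfl
    calc _ ≤ M (ξ - η) * ((k1 * (ew t (ξ - η) + ew ε (ξ - η) * ew (t - ε) η)) * ‖Z η‖ₑ +
          (k3 * (ew t (ξ - η) + ‖η‖ₑ * ew (t - 1) η)) * ‖W η‖ₑ) := by gcongr
      _ = _ := by ring
  calc _ ≤ L2 (fun ξ => k1 * A ξ + k3 * (B1 ξ + B2 ξ)) := L2_mono pt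
    _ ≤ L2 (fun ξ => k1 * A ξ) + L2 (fun ξ => k3 * (B1 ξ + B2 ξ)) :=
        L2_add_le (by fun_prop) (by fun_prop)
    _ = k1 * L2 A + k3 * L2 (fun ξ => B1 ξ + B2 ξ) := by
        rw [L2_const_mul hA.aemeasurable, L2_const_mul (f := fun ξ => B1 ξ + B2 ξ) (hB1.add hB2).aemeasurable]
    _ ≤ k1 * L2 A + k3 * (L2 B1 + L2 B2) := by
        gcongr; exact L2_add_le (by fun_prop) (by fun_prop)
    _ ≤ k1 * (C * eN t M * eN (t - ε) (fun ξ => ‖Z ξ‖ₑ)) + k3 * (eN t M * (∫⁻ ξ, ‖W ξ‖ₑ) +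
          (∫⁻ ξ, M ξ) * L2 (fun ξ => ‖ξ‖ₑ * ew (t - 1) ξ * ‖W ξ‖ₑ)) := by gcongr
    _ ≤ _ := by
        set a := eN t M
        set z := eN (t - ε) (fun ξ => ‖Z ξ‖ₑ)
        set w := ∫⁻ ξ, ‖W ξ‖ₑ
        set x := (∫⁻ ξ, M ξ) * L2 (fun ξ => ‖ξ‖ₑ * ew (t - 1) ξ * ‖W ξ‖ₑ)
        push_cast
        calc _ = k1 * C * (a * z) + k3 * (a * w + x) := by ring
          _ ≤ (k1 * C * (a * z) + k3 * (a * w + x)) + (k1 * C * (a * w + x) + k3 * (a * z)) := le_self_add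
          _ = _ := by ring
end partD

section partE
variable {d : ℕ}

theorem exp_dslope_contDiff : ContDiff ℝ (⊤ : ℕ∞) (dslope Real.exp 0) := by
  rw [contDiff_iff_contDiffAt]
  intro x
  rcases eq_or_ne x 0 with rfl | hx
  · obtain ⟨p, hp⟩ : AnalyticAt ℝ Real.exp 0 := analyticAt_rexp
    have : AnalyticAt ℝ (dslope Real.exp 0) 0 := ⟨_, hp.has_fpower_series_dslope_fslope⟩
    exact this.contDiffAt
  · have : ContDiffAt ℝ (⊤ : ℕ∞) (fun x => (x - 0)⁻¹ • (Real.exp x - Real.exp 0)) x := by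
      have h0 : x - 0 ≠ 0 := by simpa using hx
      fun_prop (disch := exact h0)
    refine this.congr_of_eventuallyEq ?_
    filter_upwards [isOpen_ne.mem_nhds hx] with y hy
    rw [dslope_of_ne _ hy, slope_def_module]

theorem exists_em (φ : 𝓢(Euc d, ℝ)) : ∃ m : 𝓢(Euc d, ℂ), ∀ x, m x = Complex.exp (φ x) - 1 := by
  obtain ⟨B, hB⟩ : ∃ B : ℝ, 0 < B ∧ ∀ x, ‖φ x‖ ≤ B := by
    obtain ⟨B, hB⟩ := φ.decay 0 0
    exact ⟨B, hB.1, fun x => by simpa using hB.2 x⟩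
  let χ : ContDiffBump (0 : ℝ) := ⟨B + 1, B + 2, by linarith, by linarith⟩
  set h : ℝ → ℝ := fun x => χ x * dslope Real.exp 0 x with hh
  have hc : HasCompactSupport h := χ.hasCompactSupport.mul_right
  have hs : ContDiff ℝ (⊤ : ℕ∞) h := χ.contDiff.mul exp_dslope_contDiff
  have ht : Function.HasTemperateGrowth (h ∘ φ) :=
    (hc.hasTemperateGrowth hs).comp φ.hasTemperateGrowth
  refine ⟨(smulLeftCLM ℝ (h ∘ φ) φ).postcompCLM Complex.ofRealCLM, fun x => ?_⟩
  rw [postcompCLM_apply, smulLeftCLM_apply_apply ht]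
  have h1 : χ (φ x) = 1 := by
    apply χ.one_of_mem_closedBall
    simp only [Metric.mem_closedBall, dist_zero_right]
    have := hB.2 x
    change _ ≤ B + 1
    linarith
  have h2 := sub_smul_dslope Real.exp 0 (φ x)
  simp only [Function.comp, hh, h1, one_mul, smul_eq_mul, sub_zero, Real.exp_zero] at h2 ⊢
  rw [mul_comm, h2]
  simp

theorem pd_eq (f : 𝓢(Euc d, ℂ)) (i : Fin d) : pd d i f = ⇑(LineDeriv.lineDerivOp (EuclideanSpace.single i (1:ℝ)) f) := by
  ext x; rfl

theorem fourier_pd (f : 𝓢(Euc d, ℂ)) (i : Fin d) (ξ : Euc d) :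
    𝓕 (pd d i f) ξ = 2 * π * Complex.I * (ξ i * 𝓕 (f : Euc d → ℂ) ξ) := by
  rw [pd_eq, ← fourier_coe, fourier_lineDerivOp_eq, ← fourier_coe]
  have ht : Function.HasTemperateGrowth (fun x : Euc d => inner ℝ x (EuclideanSpace.single i (1:ℝ))) := by fun_prop
  rw [smul_apply, smulLeftCLM_apply_apply ht]
  simp [EuclideanSpace.inner_single_right]

theorem L2_schwartz_lt_top {F : Type*} [NormedAddCommGroup F] [NormedSpace ℝ F] (f : 𝓢(Euc d, F)) (t : ℝ) :
    eN t (fun ξ => ‖f ξ‖ₑ) < ∞ ∧ Integrable (fun ξ => wt t ξ • f ξ) ∧ MemLp (fun ξ => wt t ξ • f ξ) 2 := by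
  have ht : Function.HasTemperateGrowth (fun x : Euc d => wt t x) := by
    have := Function.hasTemperateGrowth_one_add_norm_sq_rpow (H := Euc d) (t / 2)
    have e : (fun x : Euc d => wt t x) = fun x => (1 + ‖x‖ ^ 2) ^ (t / 2) := by
      ext x
      unfold wt jb
      rw [Real.sqrt_eq_rpow, ← Real.rpow_mul (by positivity)]
      congr 1; ring
    rw [e]; exact this
  set g := smulLeftCLM F (fun x : Euc d => wt t x) f
  have hg : ⇑g = fun ξ => wt t ξ • f ξ := by
    ext x; exact smulLeftCLM_apply_apply ht f x
  rw [← hg]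
  refine ⟨?_, g.integrable, g.memLp 2⟩
  have := (g.memLp 2).2
  rw [eLpNorm_eq_lintegral_rpow_enorm_toReal (by norm_num) (by norm_num)] at this
  have e : eN t (fun ξ => ‖f ξ‖ₑ) = L2 (fun ξ => ‖g ξ‖ₑ) := by
    unfold eN; congr 1; ext ξ; rw [hg]; simp only
    rw [enorm_smul, ew, Real.enorm_of_nonneg (wt_pos _ _).le]
  rw [e]
  simpa [L2] using this

theorem planch_eN (f : 𝓢(Euc d, ℂ)) : eN 0 (fun ξ => ‖𝓕 (f : Euc d → ℂ) ξ‖ₑ) = L2 (fun x => ‖f x‖ₑ) := by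
  have key : ∀ g : 𝓢(Euc d, ℂ), L2 (fun x => ‖g x‖ₑ) = ENNReal.ofReal (∫ x, ‖g x‖ ^ 2) ^ (1 / (2:ℝ)) := by
    intro g
    unfold L2
    have hi : Integrable (fun x => ‖g x‖ ^ 2) := (g.memLp 2 volume).integrable_norm_pow (by norm_num)
    rw [ofReal_integral_eq_lintegral_ofReal hi
      (Filter.Eventually.of_forall fun x => by positivity)]
    congr 2; ext ξ
    rw [ENNReal.rpow_two, ENNReal.ofReal_pow (norm_nonneg _), ofReal_norm]
  unfold eN
  simp only [ew_zero, one_mul]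
  rw [← fourier_coe, key, key, integral_norm_sq_fourier]

/-- complexified phi -/
def cphi (φ : 𝓢(Euc d, ℝ)) : 𝓢(Euc d, ℂ) := φ.postcompCLM Complex.ofRealCLM

theorem cphi_coe (φ : 𝓢(Euc d, ℝ)) : ⇑(cphi φ) = fun x => (φ x : ℂ) := by
  ext x; rfl

theorem sup_le_fourier (f : 𝓢(Euc d, ℂ)) (x : Euc d) : ‖f x‖ₑ ≤ ∫⁻ ξ, ‖𝓕 (f : Euc d → ℂ) ξ‖ₑ := by
  have h : 𝓕⁻ (𝓕 f) = f := FourierTransform.fourierInv_fourier_eq f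
  conv_lhs => rw [← h, fourierInv_coe, Real.fourierInv_eq, fourier_coe]
  refine (enorm_integral_le_lintegral_enorm _).trans (lintegral_mono fun η => ?_)
  rw [← ofReal_norm, Circle.norm_smul, ofReal_norm]

theorem m_L2 (φ : 𝓢(Euc d, ℝ)) (m : 𝓢(Euc d, ℂ)) (hm : ∀ x, m x = Complex.exp (φ x) - 1) {B : ℝ≥0}
    (hB : ∀ x, ‖φ x‖ ≤ B) : eN 0 (fun ξ => ‖𝓕 (m : Euc d → ℂ) ξ‖ₑ) ≤
      ENNReal.ofReal (Real.exp B) * eN 0 (fun ξ => ‖𝓕 (cphi φ : Euc d → ℂ) ξ‖ₑ) := by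
  rw [planch_eN, planch_eN]
  refine L2_const_mul_le (by fun_prop) _ fun x => ?_
  rw [← ofReal_norm, ← ofReal_norm, ← ENNReal.ofReal_mul (by positivity)]
  apply ENNReal.ofReal_le_ofReal
  rw [hm, cphi_coe, ← Complex.ofReal_exp, ← Complex.ofReal_one, ← Complex.ofReal_sub, Complex.norm_real,
    Complex.norm_real]
  have h1 := hB x
  set u := φ x
  have h1' := abs_le.1 (by simpa using h1 : |u| ≤ B)
  have m1 : ‖Real.exp u - 1‖ ≤ Real.exp |u| * |u| := by
    rw [Real.norm_eq_abs, abs_le]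
    have a1 := Real.add_one_le_exp u
    have a2 := Real.add_one_le_exp (-u)
    have a3 : Real.exp u * Real.exp (-u) = 1 := by rw [← Real.exp_add]; simp
    have a4 : 1 ≤ Real.exp |u| := Real.one_le_exp (abs_nonneg _)
    have a5 := Real.exp_pos u
    have a6 := Real.exp_le_exp.2 (le_abs_self u)
    constructor
    · nlinarith [neg_abs_le u, abs_nonneg u]
    · have : Real.exp u - 1 ≤ Real.exp u * u := by nlinarith
      refine this.trans ?_
      nlinarith [le_abs_self u, abs_nonneg u]
  refine m1.trans ?_
  rw [Real.norm_eq_abs]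
  gcongr
  simpa using h1

end partE

section partF
variable {d : ℕ}

theorem fourier_add_int {f g : Euc d → ℂ} (hf : Integrable f) (hg : Integrable g) (ξ : Euc d) :
    𝓕 (fun x => f x + g x) ξ = 𝓕 f ξ + 𝓕 g ξ := by
  have := VectorFourier.fourierIntegral_add (e := Real.fourierChar) (μ := volume) (L := innerₗ (Euc d))
    Real.continuous_fourierChar (by simp only [innerₗ_apply_apply]; fun_prop) hf hg
  exact (congrFun this ξ)

theorem conv_schwartz (f g : 𝓢(Euc d, ℂ)) (ξ : Euc d) :
    𝓕 (fun x => f x * g x) ξ = ∫ η, 𝓕 (f : Euc d → ℂ) (ξ - η) * 𝓕 (g : Euc d → ℂ) η := by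
  have h := conv_fourier (m := f) (Y := ⇑(𝓕 g : 𝓢(Euc d, ℂ))) f.integrable
    (𝓕 g : 𝓢(Euc d, ℂ)).integrable ξ
  have hg : 𝓕⁻ (⇑(𝓕 g : 𝓢(Euc d, ℂ))) = g := by
    rw [← fourierInv_coe, FourierTransform.fourierInv_fourier_eq g]
  rw [hg] at h
  simp only [smul_eq_mul] at h
  rw [← h, fourier_coe]

theorem pd_em (φ : 𝓢(Euc d, ℝ)) (m : 𝓢(Euc d, ℂ)) (hm : ∀ x, m x = Complex.exp (φ x) - 1) (j : Fin d) :
    pd d j m = fun x => pd d j (cphi φ) x + pd d j (cphi φ) x * m x := by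
  ext x
  have hd : DifferentiableAt ℝ (cphi φ) x := (cphi φ).differentiableAt
  have e : ⇑m = fun x => Complex.exp (cphi φ x) - 1 := by ext x; rw [hm]; rfl
  unfold pd
  have h1 : HasFDerivAt (fun x => Complex.exp (cphi φ x) - 1) (Complex.exp (cphi φ x) • fderiv ℝ (cphi φ) x) x :=
    (hd.hasFDerivAt.cexp).sub_const 1
  rw [e, h1.fderiv]
  simp
  ring

theorem em_rec (φ : 𝓢(Euc d, ℝ)) (m : 𝓢(Euc d, ℂ)) (hm : ∀ x, m x = Complex.exp (φ x) - 1) (ξ : Euc d) :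
    ‖ξ‖ₑ * ‖𝓕 (m : Euc d → ℂ) ξ‖ₑ ≤ d * (‖ξ‖ₑ * ‖𝓕 (cphi φ : Euc d → ℂ) ξ‖ₑ +
      ∫⁻ η, ‖ξ - η‖ₑ * ‖𝓕 (cphi φ : Euc d → ℂ) (ξ - η)‖ₑ * ‖𝓕 (m : Euc d → ℂ) η‖ₑ) := by
  set Q := ‖ξ‖ₑ * ‖𝓕 (cphi φ : Euc d → ℂ) ξ‖ₑ +
      ∫⁻ η, ‖ξ - η‖ₑ * ‖𝓕 (cphi φ : Euc d → ℂ) (ξ - η)‖ₑ * ‖𝓕 (m : Euc d → ℂ) η‖ₑ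
  have hc : ∀ (ζ : Euc d) (j : Fin d), ‖((ζ j : ℝ) : ℂ)‖ₑ ≤ ‖ζ‖ₑ := by
    intro ζ j
    rw [← ofReal_norm, ← ofReal_norm, Complex.norm_real]
    exact ENNReal.ofReal_le_ofReal (PiLp.norm_apply_le ζ j)
  have h1 : ∀ j : Fin d, ‖((ξ j : ℝ) : ℂ)‖ₑ * ‖𝓕 (m : Euc d → ℂ) ξ‖ₑ ≤ Q := by
    intro j
    set D := LineDeriv.lineDerivOp (EuclideanSpace.single j (1:ℝ)) (cphi φ)
    have hD : pd d j (cphi φ) = D := pd_eq _ _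
    have h2 := fourier_pd m j ξ
    have hmul : Integrable (fun x => D x * m x) := by
      have := (pairing (ContinuousLinearMap.mul ℝ ℂ) D m).integrable (μ := volume)
      exact this
    rw [pd_em φ m hm j, hD, fourier_add_int D.integrable hmul, conv_schwartz, ← hD] at h2
    simp only [fourier_pd] at h2
    have hpi : (2 * π * Complex.I : ℂ) ≠ 0 := by simp [Real.pi_ne_zero]
    have h3 : ((ξ j : ℝ) : ℂ) * 𝓕 (m : Euc d → ℂ) ξ = (ξ j : ℝ) * 𝓕 (cphi φ : Euc d → ℂ) ξ +
        ∫ η, (((ξ - η) j : ℝ) * 𝓕 (cphi φ : Euc d → ℂ) (ξ - η)) * 𝓕 (m : Euc d → ℂ) η := by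
      apply mul_left_cancel₀ hpi
      rw [← h2, mul_add, ← integral_const_mul]
      congr 2; ext η; ring
    rw [← enorm_mul, h3]
    refine (enorm_add_le _ _).trans ?_
    refine add_le_add ?_ ((enorm_integral_le_lintegral_enorm _).trans (lintegral_mono fun η => ?_))
    · rw [enorm_mul]; gcongr; exact hc ξ j
    · rw [enorm_mul, enorm_mul]; gcongr; exact hc (ξ - η) j
  have h4 : ‖ξ‖ₑ ≤ ∑ j, ‖((ξ j : ℝ) : ℂ)‖ₑ := by
    have : ‖ξ‖ ≤ ∑ j, ‖ξ j‖ := by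
      rw [EuclideanSpace.norm_eq]
      apply Real.sqrt_le_iff.2 ⟨by positivity, ?_⟩
      exact Finset.sum_sq_le_sq_sum_of_nonneg (fun i _ => norm_nonneg _)
    rw [← ofReal_norm]
    refine (ENNReal.ofReal_le_ofReal this).trans ?_
    rw [ENNReal.ofReal_sum_of_nonneg (fun i _ => norm_nonneg _)]
    simp [← ofReal_norm]
  calc _ ≤ (∑ j, ‖((ξ j : ℝ) : ℂ)‖ₑ) * ‖𝓕 (m : Euc d → ℂ) ξ‖ₑ := by gcongr
    _ = ∑ j, ‖((ξ j : ℝ) : ℂ)‖ₑ * ‖𝓕 (m : Euc d → ℂ) ξ‖ₑ := Finset.sum_mul _ _ _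
    _ ≤ ∑ j : Fin d, Q := Finset.sum_le_sum fun j _ => h1 j
    _ = _ := by simp

theorem em_step {t ε : ℝ} (ht : 1 ≤ t) (h0 : 0 ≤ ε) (h1 : ε ≤ 1) (hd : (d:ℝ) / 2 < t - ε) :
    ∃ C : ℝ≥0, ∀ (φ : 𝓢(Euc d, ℝ)) (m : 𝓢(Euc d, ℂ)), (∀ x, m x = Complex.exp (φ x) - 1) →
    eN t (fun ξ => ‖𝓕 (m : Euc d → ℂ) ξ‖ₑ) ≤ C * (1 + eN t (fun ξ => ‖𝓕 (cphi φ : Euc d → ℂ) ξ‖ₑ)) *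
        eN (t - ε) (fun ξ => ‖𝓕 (m : Euc d → ℂ) ξ‖ₑ) + C * eN t (fun ξ => ‖𝓕 (cphi φ : Euc d → ℂ) ξ‖ₑ) := by
  obtain ⟨C, hC⟩ := bilin (d := d) h0 hd
  set k2 : ℝ≥0 := ((2:ℝ) ^ (t - 1)).toNNReal with hk2
  refine ⟨1 + d + d * k2 * C, fun φ m hm => ?_⟩
  have me := fun t => measurable_ew (d := d) t
  have mM := (fourier_cont (m.integrable (μ := volume))).measurable.enorm
  have mF := (fourier_cont ((cphi φ).integrable (μ := volume))).measurable.enorm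
  set M : Euc d → ℝ≥0∞ := fun ξ => ‖𝓕 (m : Euc d → ℂ) ξ‖ₑ with hM
  set F : Euc d → ℝ≥0∞ := fun ξ => ‖𝓕 (cphi φ : Euc d → ℂ) ξ‖ₑ with hF
  set A : Euc d → ℝ≥0∞ := fun ξ => ∫⁻ η, (ew t (ξ - η) + ew ε (ξ - η) * ew (t - ε) η) * (F (ξ - η) * M η)
  have hA : Measurable A := by
    apply Measurable.lintegral_prod_right' (f := fun q : Euc d × Euc d =>
      (ew t (q.1 - q.2) + ew ε (q.1 - q.2) * ew (t - ε) q.2) * (F (q.1 - q.2) * M q.2))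
    fun_prop
  have lA : L2 A ≤ C * eN t F * eN (t - ε) M := hC _ _ mF mM
  have hw : ∀ ξ : Euc d, ‖ξ‖ₑ * ew (t - 1) ξ ≤ ew t ξ := by
    intro ξ
    have : t = 1 + (t - 1) := by ring
    conv_rhs => rw [this, ew_add]
    gcongr
    rw [← ofReal_norm, ew, wt_one]
    exact ENNReal.ofReal_le_ofReal (norm_le_jb ξ)
  have hw2 : ∀ ξ : Euc d, ew t ξ ≤ ew (t - ε) ξ + ‖ξ‖ₑ * ew (t - 1) ξ := by
    intro ξ
    have : t = 1 + (t - 1) := by ring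
    have h2 : ew 1 ξ ≤ 1 + ‖ξ‖ₑ := by
      rw [← ofReal_norm, ← ENNReal.ofReal_one, ← ENNReal.ofReal_add one_pos.le (norm_nonneg _), ew, wt_one]
      apply ENNReal.ofReal_le_ofReal
      unfold jb
      apply Real.sqrt_le_iff.2 ⟨by positivity, ?_⟩
      nlinarith [norm_nonneg ξ]
    calc ew t ξ = ew 1 ξ * ew (t - 1) ξ := by conv_lhs => rw [this, ew_add]
      _ ≤ (1 + ‖ξ‖ₑ) * ew (t - 1) ξ := by gcongr
      _ = ew (t - 1) ξ + ‖ξ‖ₑ * ew (t - 1) ξ := by ring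
      _ ≤ _ := by gcongr; exact ew_mono (by linarith) ξ
  have pt : ∀ ξ, ew t ξ * M ξ ≤ ew (t - ε) ξ * M ξ + (d * (ew t ξ * F ξ) + (d * k2 : ℝ≥0) * A ξ) := by
    intro ξ
    have r := em_rec φ m hm ξ
    have k : ew (t - 1) ξ * (∫⁻ η, ‖ξ - η‖ₑ * F (ξ - η) * M η) ≤ k2 * A ξ := by
      rw [← lintegral_const_mul _ (by fun_prop), ← lintegral_const_mul _ (by fun_prop)]
      refine lintegral_mono fun η => ?_
      have q : ‖ξ - η‖ₑ * ew (t - 1) ξ ≤ k2 * (ew t (ξ - η) + ew ε (ξ - η) * ew (t - ε) η) := by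
        rw [← ofReal_norm, ew, ← ENNReal.ofReal_mul (norm_nonneg _)]
        refine (ENNReal.ofReal_le_ofReal (kernel2 ht h0 h1 ξ η)).trans (le_of_eq ?_)
        have w1 := (wt_pos t (ξ - η)).le
        have w2 := (wt_pos ε (ξ - η)).le
        have w3 := (wt_pos (t - ε) η).le
        rw [ENNReal.ofReal_mul (by positivity), ENNReal.ofReal_add w1 (mul_nonneg w2 w3), ENNReal.ofReal_mul w2]
        rfl
      calc _ = (‖ξ - η‖ₑ * ew (t - 1) ξ) * (F (ξ - η) * M η) := by ring
        _ ≤ (k2 * (ew t (ξ - η) + ew ε (ξ - η) * ew (t - ε) η)) * (F (ξ - η) * M η) := by gcongr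
        _ = _ := by ring
    calc ew t ξ * M ξ ≤ (ew (t - ε) ξ + ‖ξ‖ₑ * ew (t - 1) ξ) * M ξ := by gcongr; exact hw2 ξ
      _ = ew (t - ε) ξ * M ξ + ew (t - 1) ξ * (‖ξ‖ₑ * M ξ) := by ring
      _ ≤ ew (t - ε) ξ * M ξ + ew (t - 1) ξ * (d * (‖ξ‖ₑ * F ξ + ∫⁻ η, ‖ξ - η‖ₑ * F (ξ - η) * M η)) := by
          gcongr
      _ = ew (t - ε) ξ * M ξ + (d * ((‖ξ‖ₑ * ew (t - 1) ξ) * F ξ) +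
            d * (ew (t - 1) ξ * ∫⁻ η, ‖ξ - η‖ₑ * F (ξ - η) * M η)) := by ring
      _ ≤ ew (t - ε) ξ * M ξ + (d * (ew t ξ * F ξ) + d * (k2 * A ξ)) := by gcongr; exact hw ξ
      _ = _ := by push_cast; ring
  calc eN t M ≤ L2 (fun ξ => ew (t - ε) ξ * M ξ + (d * (ew t ξ * F ξ) + (d * k2 : ℝ≥0) * A ξ)) := L2_mono pt
    _ ≤ eN (t - ε) M + L2 (fun ξ => d * (ew t ξ * F ξ) + (d * k2 : ℝ≥0) * A ξ) :=
        L2_add_le (by fun_prop) (by fun_prop)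
    _ ≤ eN (t - ε) M + (L2 (fun ξ => d * (ew t ξ * F ξ)) + L2 (fun ξ => (d * k2 : ℝ≥0) * A ξ)) := by
        gcongr; exact L2_add_le (by fun_prop) (by fun_prop)
    _ = eN (t - ε) M + (d * eN t F + (d * k2 : ℝ≥0) * L2 A) := by
        rw [L2_const_mul hA.aemeasurable, L2_const_mul (f := fun ξ => ew t ξ * F ξ) (by fun_prop)]; rfl
    _ ≤ eN (t - ε) M + (d * eN t F + (d * k2 : ℝ≥0) * (C * eN t F * eN (t - ε) M)) := by gcongr
    _ ≤ _ := by
        set x := eN (t - ε) M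
        set y := eN t F
        push_cast
        calc _ ≤ (x + (d * y + d * k2 * (C * y * x))) + ((d + d * k2 * C) * x + (1 + d) * (y * x) + (1 + d * k2 * C) * y) := le_self_add
          _ = _ := by ring

theorem em_bound {s : ℝ} (hs1 : 1 ≤ s) (hs : (d:ℝ) / 2 < s) (a : ℝ≥0) : ∃ K : ℝ≥0,
    ∀ (φ : 𝓢(Euc d, ℝ)) (m : 𝓢(Euc d, ℂ)), (∀ x, m x = Complex.exp (φ x) - 1) →
    eN s (fun ξ => ‖𝓕 (cphi φ : Euc d → ℂ) ξ‖ₑ) ≤ a →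
    (∀ x, ‖φ x‖ ≤ K) ∧ eN s (fun ξ => ‖𝓕 (m : Euc d → ℂ) ξ‖ₑ) ≤ K ∧
    eN (s + 1) (fun ξ => ‖𝓕 (m : Euc d → ℂ) ξ‖ₑ) ≤
      K * (1 + eN (s + 1) (fun ξ => ‖𝓕 (cphi φ : Euc d → ℂ) ξ‖ₑ)) := by
  obtain ⟨C0, hC0⟩ := embed0 hs
  set ε : ℝ := min ((s - d / 2) / 2) 1 with hε
  have hε0 : 0 < ε := lt_min (by linarith) one_pos
  have hε1 : ε ≤ 1 := min_le_right _ _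
  have hε2 : (d:ℝ) / 2 < s - ε := by
    have : ε ≤ (s - d / 2) / 2 := min_le_left _ _
    linarith
  obtain ⟨C1, hC1⟩ := em_step hs1 hε0.le hε1 hε2
  obtain ⟨C2, hC2⟩ := em_step (d := d) (t := s + 1) (ε := 1) (by linarith) one_pos.le le_rfl (by linarith)
  obtain ⟨C3, hC3⟩ := absorb (d := d) hε0 (hε1.trans hs1) (C1 * (1 + a))
  set B : ℝ≥0 := C0 * a
  set K1 : ℝ≥0 := C3 * ((Real.exp B).toNNReal * a) + 2 * (C1 * a)
  set K2 : ℝ≥0 := C2 * K1 + C2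
  have eB : (B : ℝ≥0∞) = C0 * a := by simp only [B]; push_cast; rfl
  have eK1 : (K1 : ℝ≥0∞) = C3 * ((Real.exp B).toNNReal * a : ℝ≥0) + 2 * (C1 * a) := by
    simp only [K1]; push_cast; rfl
  have eK2 : (K2 : ℝ≥0∞) = C2 * K1 + C2 := by simp only [K2]; push_cast; rfl
  refine ⟨B + K1 + K2, fun φ m hm ha => ?_⟩
  have mM := (fourier_cont (m.integrable (μ := volume))).measurable.enorm
  have mF := (fourier_cont ((cphi φ).integrable (μ := volume))).measurable.enorm
  have fM := (L2_schwartz_lt_top (𝓕 m : 𝓢(Euc d, ℂ)) s).1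
  rw [fourier_coe] at fM
  set M : Euc d → ℝ≥0∞ := fun ξ => ‖𝓕 (m : Euc d → ℂ) ξ‖ₑ with hM
  set F : Euc d → ℝ≥0∞ := fun ξ => ‖𝓕 (cphi φ : Euc d → ℂ) ξ‖ₑ with hF
  have hB : ∀ x, ‖φ x‖ ≤ B := by
    intro x
    have : ‖cphi φ x‖ₑ ≤ (B : ℝ≥0∞) := by
      refine (sup_le_fourier (cphi φ) x).trans ((hC0 F mF).trans ?_)
      rw [eB]; gcongr
    rw [cphi_coe] at this
    simp only [← ofReal_norm, Complex.norm_real] at this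
    rw [ENNReal.ofReal_le_iff_le_toReal ENNReal.coe_ne_top] at this
    simpa using this
  have h0 : eN 0 M ≤ ((Real.exp B).toNNReal * a : ℝ≥0) := by
    refine (m_L2 φ m hm hB).trans ?_
    push_cast
    refine mul_le_mul' le_rfl ((eN_mono (by linarith) F).trans ha)
  have h1 : eN s M ≤ K1 := by
    have q := hC3 M (C1 * a) mM fM (by
      refine (hC1 φ m hm).trans ?_
      push_cast
      gcongr)
    refine q.trans ?_
    rw [eK1]
    gcongr
  have h2 : eN (s + 1) M ≤ K2 * (1 + eN (s + 1) F) := by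
    refine (hC2 φ m hm).trans ?_
    rw [add_sub_cancel_right]
    calc C2 * (1 + eN (s + 1) F) * eN s M + C2 * eN (s + 1) F
        ≤ C2 * (1 + eN (s + 1) F) * K1 + C2 * (1 + eN (s + 1) F) := by gcongr; exact le_add_self
      _ = _ := by rw [eK2]; ring
  refine ⟨fun x => (hB x).trans ?_, h1.trans ?_, h2.trans ?_⟩
  · push_cast
    have := K1.coe_nonneg; have := K2.coe_nonneg; linarith
  · push_cast
    calc (K1 : ℝ≥0∞) ≤ K1 + (B + K2) := le_self_add
      _ = _ := by ring
  · gcongr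
    push_cast
    exact le_add_self

end partF

section partG
variable {d : ℕ}

theorem radial_int (hd : 3 ≤ d) {s : ℝ} (hs : (d:ℝ) / 2 < s) :
    Integrable (fun ξ : Euc d => (‖ξ‖ ^ 2)⁻¹ * (1 + ‖ξ‖ ^ 2) ^ (-s)) := by
  have : Nonempty (Fin d) := ⟨⟨0, by omega⟩⟩
  have : Nontrivial (Euc d) := inferInstance
  rw [integrable_fun_norm_addHaar volume (f := fun y : ℝ => (y ^ 2)⁻¹ * (1 + y ^ 2) ^ (-s))]
  refine (integrable_inv_one_add_sq.integrableOn (s := Set.Ioi 0)).mono' ?_ ?_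
  · apply Measurable.aestronglyMeasurable
    fun_prop
  · filter_upwards [ae_restrict_mem measurableSet_Ioi] with y hy
    have hy : 0 < y := hy
    have hf : Module.finrank ℝ (Euc d) = d := by simp
    rw [hf, smul_eq_mul, Real.norm_of_nonneg (by positivity)]
    have h1 : y ^ (d - 1) * ((y ^ 2)⁻¹ * (1 + y ^ 2) ^ (-s)) = y ^ (d - 3) * (1 + y ^ 2) ^ (-s) := by
      have : d - 1 = (d - 3) + 2 := by omega
      rw [this, pow_add]; field_simp
    rw [h1]
    have h2 : y ^ (d - 3) ≤ (1 + y ^ 2) ^ (((d:ℝ) - 3) / 2) := by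
      have h3 : y ≤ (1 + y ^ 2) ^ (1 / 2 : ℝ) := by
        rw [← Real.sqrt_eq_rpow]
        apply Real.le_sqrt_of_sq_le; linarith
      calc y ^ (d - 3) ≤ ((1 + y ^ 2) ^ (1 / 2 : ℝ)) ^ (d - 3) := by gcongr
        _ = _ := by
          rw [← Real.rpow_natCast, ← Real.rpow_mul (by positivity), Nat.cast_sub hd]
          congr 1; push_cast; ring
    calc _ ≤ (1 + y ^ 2) ^ (((d:ℝ) - 3) / 2) * (1 + y ^ 2) ^ (-s) := by gcongr
      _ = (1 + y ^ 2) ^ (((d:ℝ) - 3) / 2 - s) := by rw [← Real.rpow_add (by positivity)]; rfl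
      _ ≤ (1 + y ^ 2) ^ (-1 : ℝ) := Real.rpow_le_rpow_of_exponent_le (by nlinarith) (by linarith)
      _ = _ := Real.rpow_neg_one _

theorem W_L1 (hd : 3 ≤ d) {s : ℝ} (hs : (d:ℝ) / 2 < s) : ∃ C : ℝ≥0, ∀ f : Euc d → ℝ≥0∞, Measurable f →
    ∫⁻ ξ, f ξ ≤ C * L2 (fun ξ => ‖ξ‖ₑ * ew s ξ * f ξ) := by
  have : Nonempty (Fin d) := ⟨⟨0, by omega⟩⟩
  have : Nontrivial (Euc d) := inferInstance
  set q : Euc d → ℝ≥0∞ := fun ξ => ENNReal.ofReal (‖ξ‖⁻¹ * wt (-s) ξ) with hq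
  have mq : Measurable q := by
    have := (continuous_wt (d := d) (-s)).measurable
    fun_prop
  have hfin : L2 q < ∞ := by
    unfold L2
    refine ENNReal.rpow_lt_top_of_nonneg (by norm_num) (ne_of_lt ?_)
    have h := (radial_int hd hs).2
    refine lt_of_le_of_lt (lintegral_mono fun ξ => ?_) h
    rw [ENNReal.rpow_two, hq]
    simp only
    rw [← ENNReal.ofReal_pow (by have := (wt_pos (-s) ξ).le; positivity), mul_pow, wt_sq, inv_pow,
      Real.enorm_of_nonneg (by positivity)]
  refine ⟨(L2 q).toNNReal, fun f hf => ?_⟩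
  rw [ENNReal.coe_toNNReal hfin.ne]
  have me := measurable_ew (d := d) s
  refine le_trans (lintegral_mono_ae ?_) (CS mq.aemeasurable (g := fun ξ => ‖ξ‖ₑ * ew s ξ * f ξ) (by fun_prop))
  have : ∀ᵐ ξ : Euc d, ξ ≠ 0 := by
    rw [ae_iff]; simp
  filter_upwards [this] with ξ hξ
  rw [← mul_assoc]
  have : q ξ * (‖ξ‖ₑ * ew s ξ) = 1 := by
    simp only [hq]
    have h0 := (wt_pos (-s) ξ).le
    rw [← ofReal_norm, ew, ← ENNReal.ofReal_mul (norm_nonneg _), ← ENNReal.ofReal_mul (by positivity)]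
    have h1 : wt (-s) ξ * wt s ξ = 1 := by rw [← wt_add]; simp [wt_zero]
    have h2 : ‖ξ‖ ≠ 0 := norm_ne_zero_iff.2 hξ
    have : ‖ξ‖⁻¹ * wt (-s) ξ * (‖ξ‖ * wt s ξ) = 1 := by
      calc _ = (‖ξ‖⁻¹ * ‖ξ‖) * (wt (-s) ξ * wt s ξ) := by ring
        _ = 1 := by rw [h1, inv_mul_cancel₀ h2, one_mul]
    rw [this]; simp
  rw [this, one_mul]

theorem eN_hNorm (f : 𝓢(Euc d, ℂ)) (s : ℝ) :
    eN s (fun ξ => ‖𝓕 (f : Euc d → ℂ) ξ‖ₑ) = ENNReal.ofReal (hNorm d s f) := by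
  have h := (L2_schwartz_lt_top (𝓕 f : 𝓢(Euc d, ℂ)) s).2.2
  rw [fourier_coe] at h
  have hi := h.integrable_norm_pow (p := 2) (by norm_num)
  have e : ∀ ξ, ‖wt s ξ • 𝓕 (f : Euc d → ℂ) ξ‖ ^ 2 = (1 + ‖ξ‖ ^ 2) ^ s * ‖𝓕 (f : Euc d → ℂ) ξ‖ ^ 2 := by
    intro ξ
    rw [norm_smul, mul_pow, Real.norm_of_nonneg (wt_pos _ _).le, wt_sq]
  have hi2 : Integrable (fun ξ => (1 + ‖ξ‖ ^ 2) ^ s * ‖𝓕 (f : Euc d → ℂ) ξ‖ ^ 2) := by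
    refine hi.congr (Filter.Eventually.of_forall fun ξ => ?_)
    exact e ξ
  unfold hNorm eN L2
  have hnn : 0 ≤ hNormSq d s f := by
    unfold hNormSq
    exact integral_nonneg fun ξ => by positivity
  rw [Real.sqrt_eq_rpow, ← ENNReal.ofReal_rpow_of_nonneg hnn (by norm_num)]
  unfold hNormSq
  rw [ofReal_integral_eq_lintegral_ofReal hi2 (Filter.Eventually.of_forall fun ξ => by positivity)]
  congr 2; ext ξ
  rw [← e, ENNReal.rpow_two, ENNReal.ofReal_pow (norm_nonneg _), ofReal_norm, enorm_wt_smul]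

abbrev HH (d : ℕ) := EuclideanSpace ℂ (Fin d)

/-- complexified vector -/
def ce (ξ : Euc d) : HH d := WithLp.toLp 2 (fun i => (ξ i : ℂ))

theorem ce_apply (ξ : Euc d) (i : Fin d) : ce ξ i = (ξ i : ℂ) := rfl

theorem ce_norm (ξ : Euc d) : ‖ce ξ‖ = ‖ξ‖ := by
  rw [EuclideanSpace.norm_eq, EuclideanSpace.norm_eq]
  simp [ce_apply]

theorem ce_inner (ξ : Euc d) (x : HH d) : inner ℂ (ce ξ) x = ∑ i, (ξ i : ℂ) * x i := by
  rw [PiLp.inner_apply]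
  apply Finset.sum_congr rfl
  intro i _
  rw [ce_apply]; simp [mul_comm]

theorem ce_cont : Continuous (ce : Euc d → HH d) := by
  unfold ce
  fun_prop

/-- minus the projection -/
def zproj (ξ : Euc d) (x : HH d) : HH d := (-(((‖ξ‖ ^ 2)⁻¹ : ℝ) : ℂ) * inner ℂ (ce ξ) x) • ce ξ

theorem zproj_norm (ξ : Euc d) (x : HH d) : ‖zproj ξ x‖ ≤ ‖x‖ := by
  unfold zproj
  rw [norm_smul, norm_mul, norm_neg, Complex.norm_real, ce_norm, Real.norm_of_nonneg (by positivity)]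
  have h := norm_inner_le_norm (𝕜 := ℂ) (ce ξ) x
  rw [ce_norm] at h
  rcases eq_or_ne ‖ξ‖ 0 with h0 | h0
  · rw [h0]; simp
  · calc (‖ξ‖ ^ 2)⁻¹ * ‖inner ℂ (ce ξ) x‖ * ‖ξ‖ ≤ (‖ξ‖ ^ 2)⁻¹ * (‖ξ‖ * ‖x‖) * ‖ξ‖ := by gcongr
      _ = ‖x‖ := by field_simp

theorem zproj_inner (ξ : Euc d) (x : HH d) : inner ℂ (ce ξ) (zproj ξ x) = - inner ℂ (ce ξ) x := by
  unfold zproj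
  rw [inner_smul_right, inner_self_eq_norm_sq_to_K, ce_norm]
  rcases eq_or_ne ξ 0 with h0 | h0
  · subst h0
    have : ce (0 : Euc d) = 0 := by ext i; simp [ce_apply]
    simp [this]
  · have : (‖ξ‖ : ℂ) ≠ 0 := by exact_mod_cast norm_ne_zero_iff.2 h0
    push_cast
    field_simp
    simp [mul_comm]

theorem zproj_orth (ξ : Euc d) (x : HH d) : inner ℂ (zproj ξ x) (zproj ξ x + x) = 0 := by
  have h := zproj_inner ξ x
  set z := zproj ξ x with hz
  rw [hz]
  conv_lhs => enter [2]; rw [zproj]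
  rw [inner_smul_left, inner_add_right, ← hz, h]
  simp

theorem zproj_curl (ξ : Euc d) (x : HH d) (i j : Fin d) :
    (ξ i : ℂ) * zproj ξ x j - ξ j * zproj ξ x i = 0 := by
  unfold zproj
  simp [ce_apply]
  ring

theorem div_curl (ξ : Euc d) (w : HH d) : ‖ξ‖ * ‖w‖ ≤
    (∑ i, ∑ j, ‖(ξ i : ℂ) * w j - ξ j * w i‖) + d * ‖∑ i, (ξ i : ℂ) * w i‖ := by
  have hc : ∀ j : Fin d, ‖(ξ j : ℂ)‖ ≤ ‖ξ‖ := fun j => by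
    rw [Complex.norm_real]; exact PiLp.norm_apply_le ξ j
  have h1 : ∀ j, ‖ξ‖ * ‖w j‖ ≤ (∑ i, ‖(ξ i : ℂ) * w j - ξ j * w i‖) + ‖∑ i, (ξ i : ℂ) * w i‖ := by
    intro j
    have e : ((‖ξ‖ ^ 2 : ℝ) : ℂ) * w j = ∑ i, (ξ i : ℂ) * ((ξ i : ℂ) * w j - ξ j * w i) + ξ j * ∑ i, (ξ i : ℂ) * w i := by
      rw [EuclideanSpace.norm_sq_eq, Finset.mul_sum, ← Finset.sum_add_distrib, Complex.ofReal_sum, Finset.sum_mul]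
      apply Finset.sum_congr rfl
      intro i _
      simp only [Real.norm_eq_abs, sq_abs]
      push_cast
      ring
    rcases eq_or_ne ‖ξ‖ 0 with h0 | h0
    · rw [h0, zero_mul]; positivity
    · have hp : 0 < ‖ξ‖ := lt_of_le_of_ne (norm_nonneg _) h0.symm
      have : ‖ξ‖ * (‖ξ‖ * ‖w j‖) ≤ ‖ξ‖ * ((∑ i, ‖(ξ i : ℂ) * w j - ξ j * w i‖) + ‖∑ i, (ξ i : ℂ) * w i‖) := by
        calc ‖ξ‖ * (‖ξ‖ * ‖w j‖) = ‖((‖ξ‖ ^ 2 : ℝ) : ℂ) * w j‖ := by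
              rw [norm_mul, Complex.norm_real, norm_pow, norm_norm]; ring
          _ ≤ (∑ i, ‖ξ‖ * ‖(ξ i : ℂ) * w j - ξ j * w i‖) + ‖ξ‖ * ‖∑ i, (ξ i : ℂ) * w i‖ := by
              rw [e]
              refine (norm_add_le _ _).trans (add_le_add ((norm_sum_le _ _).trans (Finset.sum_le_sum fun i _ => ?_)) ?_)
              · rw [norm_mul]; gcongr; exact hc i
              · rw [norm_mul]; gcongr; exact hc j
          _ = _ := by rw [← Finset.mul_sum]; ring
      exact le_of_mul_le_mul_left this hp
  have h2 : ‖w‖ ≤ ∑ j, ‖w j‖ := by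
    rw [EuclideanSpace.norm_eq]
    apply Real.sqrt_le_iff.2 ⟨by positivity, ?_⟩
    exact Finset.sum_sq_le_sq_sum_of_nonneg (fun i _ => norm_nonneg _)
  calc ‖ξ‖ * ‖w‖ ≤ ‖ξ‖ * ∑ j, ‖w j‖ := by gcongr
    _ = ∑ j, ‖ξ‖ * ‖w j‖ := Finset.mul_sum _ _ _
    _ ≤ ∑ j, ((∑ i, ‖(ξ i : ℂ) * w j - ξ j * w i‖) + ‖∑ i, (ξ i : ℂ) * w i‖) := Finset.sum_le_sum fun j _ => h1 j
    _ = _ := by rw [Finset.sum_add_distrib, Finset.sum_comm]; simp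

end partG

section partH
variable {d : ℕ}

theorem exists_vec (v : Fin d → 𝓢(Euc d, ℂ)) : ∃ vS : 𝓢(Euc d, HH d), ∀ x j, vS x j = v j x := by
  let L : Fin d → (ℂ →L[ℝ] HH d) := fun j =>
    ((LinearMap.toContinuousLinearMap (𝕜 := ℂ) (E := ℂ) (F' := HH d) (LinearMap.toSpanSingleton ℂ (HH d) (EuclideanSpace.single j 1))).restrictScalars ℝ)
  refine ⟨∑ j, (v j).postcompCLM (L j), fun x j => ?_⟩
  rw [sum_apply]
  simp only [postcompCLM_apply, L]
  simp [Pi.single_apply]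

theorem fourier_comp_vec (f : 𝓢(Euc d, HH d)) (ξ : Euc d) (j : Fin d) :
    (𝓕 (f : Euc d → HH d) ξ) j = 𝓕 (fun x => f x j) ξ := by
  rw [Real.fourier_eq, Real.fourier_eq]
  have hi : Integrable (fun x => Real.fourierChar (-inner ℝ x ξ) • f x) := by
    exact (Real.fourierIntegral_convergent_iff ξ).2 f.integrable
  have := (EuclideanSpace.proj (𝕜 := ℂ) j : HH d →L[ℂ] ℂ).integral_comp_comm hi
  exact this.symm

theorem exists_setup (φ : 𝓢(Euc d, ℝ)) (m : 𝓢(Euc d, ℂ)) (hm : ∀ x, m x = Complex.exp (φ x) - 1)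
    {K : ℝ} (hK : ∀ x, ‖φ x‖ ≤ K) (v : Fin d → 𝓢(Euc d, ℂ)) :
    ∃ Z W : Euc d → HH d, Setup (m : Euc d → ℂ) (Real.exp (-K)) Z W ∧
      (∀ t, eN t (fun ξ => ‖Z ξ‖ₑ) < ∞) ∧
      (∀ ξ j, 𝓕 (v j : Euc d → ℂ) ξ = Z ξ j + W ξ j) ∧
      (∀ ξ i j, (ξ i : ℂ) * W ξ j - ξ j * W ξ i
        = ξ i * 𝓕 (v j : Euc d → ℂ) ξ - ξ j * 𝓕 (v i : Euc d → ℂ) ξ) ∧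
      (∀ ξ, ∑ i, (ξ i : ℂ) * W ξ i = ∑ i, (ξ i : ℂ) * 𝓕 (fun y => Complex.exp (φ y) * v i y) ξ) := by
  obtain ⟨vS, hvS⟩ := exists_vec v
  set mv : 𝓢(Euc d, HH d) := smulLeftCLM (HH d) (m : Euc d → ℂ) vS with hmv
  have hmvx : ∀ x, mv x = m x • vS x := fun x => smulLeftCLM_apply_apply m.hasTemperateGrowth vS x
  set V : Euc d → HH d := 𝓕 (vS : Euc d → HH d) with hV
  set MV : Euc d → HH d := 𝓕 (mv : Euc d → HH d) with hMV
  have hVj : ∀ ξ j, V ξ j = 𝓕 (v j : Euc d → ℂ) ξ := by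
    intro ξ j
    rw [hV, fourier_comp_vec]
    simp only [hvS]
  have hMVj : ∀ ξ j, MV ξ j = 𝓕 (fun x => m x * v j x) ξ := by
    intro ξ j
    rw [hMV, fourier_comp_vec]
    have e : (fun x => mv x j) = fun x => m x * v j x := by
      funext x
      rw [hmvx, PiLp.smul_apply, hvS, smul_eq_mul]
    rw [e]
  have hVS : V = ⇑(𝓕 vS : 𝓢(Euc d, HH d)) := (fourier_coe vS).symm
  have hMVS : MV = ⇑(𝓕 mv : 𝓢(Euc d, HH d)) := (fourier_coe mv).symm
  have hVi : Integrable V := by rw [hVS]; exact SchwartzMap.integrable _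
  have hMVi : Integrable MV := by rw [hMVS]; exact SchwartzMap.integrable _
  have hVc : Continuous V := by rw [hVS]; exact SchwartzMap.continuous _
  have hMVc : Continuous MV := by rw [hMVS]; exact SchwartzMap.continuous _
  have hconv : ∀ ξ, ∫ η, 𝓕 (m : Euc d → ℂ) (ξ - η) • V η = MV ξ := by
    intro ξ
    rw [conv_fourier m.integrable hVi]
    have : 𝓕⁻ V = (vS : Euc d → HH d) := by
      rw [hVS, ← fourierInv_coe]
      simp
    have e : (mv : Euc d → HH d) = fun x => m x • vS x := funext hmvx
    rw [this, hMV, e]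
  set Z : Euc d → HH d := fun ξ => zproj ξ (MV ξ) with hZ
  set W : Euc d → HH d := fun ξ => V ξ - Z ξ with hW
  have hZm : Measurable Z := by
    have h1 : Measurable (fun ξ : Euc d => inner ℂ (ce ξ) (MV ξ)) := (ce_cont.inner hMVc).measurable
    have h2 : Measurable (fun ξ : Euc d => (-(((‖ξ‖ ^ 2)⁻¹ : ℝ) : ℂ))) := by fun_prop
    exact (h2.mul h1).smul ce_cont.measurable
  have hWm : Measurable W := hVc.measurable.sub hZm
  have hZle : ∀ t ξ, ‖wt t ξ • Z ξ‖ ≤ ‖wt t ξ • MV ξ‖ := by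
    intro t ξ
    rw [norm_smul, norm_smul]
    gcongr
    exact zproj_norm _ _
  have hZsm : ∀ t, AEStronglyMeasurable (fun ξ => wt t ξ • Z ξ) :=
    fun t => ((continuous_wt t).measurable.smul hZm).aestronglyMeasurable
  have hfin := fun t => L2_schwartz_lt_top (𝓕 mv : 𝓢(Euc d, HH d)) t
  rw [← hMVS] at hfin
  have hZ1 : ∀ t, Integrable (fun ξ => wt t ξ • Z ξ) :=
    fun t => (hfin t).2.1.mono (hZsm t) (Filter.Eventually.of_forall (hZle t))
  have hZi : Integrable Z := by simpa [wt_zero] using hZ1 0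
  have hZW : ∀ ξ, Z ξ + W ξ = V ξ := fun ξ => by simp [hW]
  refine ⟨Z, W, ?_, ?_, ?_, ?_, ?_⟩
  · refine ⟨m.integrable, m.continuous, ?_, ⟨fun x => Real.exp (φ x), fun x => ?_, fun x => ?_⟩, Real.exp_pos _, hZm, hWm, hZ1,
      fun t => (hfin t).2.2.mono (hZsm t) (Filter.Eventually.of_forall (hZle t)), hVi.sub hZi, fun ξ => ?_⟩
    · obtain ⟨B, hB⟩ := m.decay 0 0
      exact ⟨B, fun x => by simpa using hB.2 x⟩
    · rw [hm]; simp
    · exact Real.exp_le_exp.2 (abs_le.1 (hK x)).1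
    · simp only [hZW]
      rw [hconv]
      exact zproj_orth ξ (MV ξ)
  · intro t
    refine lt_of_le_of_lt (L2_mono fun ξ => ?_) (hfin t).1
    gcongr
    change ‖Z ξ‖ₑ ≤ ‖MV ξ‖ₑ
    rw [← ofReal_norm, ← ofReal_norm]
    exact ENNReal.ofReal_le_ofReal (zproj_norm _ _)
  · intro ξ j
    rw [← PiLp.add_apply, hZW, hVj]
  · intro ξ i j
    have := zproj_curl ξ (MV ξ) i j
    change (ξ i : ℂ) * (V ξ - Z ξ) j - ξ j * (V ξ - Z ξ) i = _
    rw [PiLp.sub_apply, PiLp.sub_apply, hVj, hVj]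
    change (ξ i : ℂ) * Z ξ j - ξ j * Z ξ i = 0 at this
    linear_combination -this
  · intro ξ
    have h1 := zproj_inner ξ (MV ξ)
    rw [← ce_inner]
    change inner ℂ (ce ξ) (V ξ - Z ξ) = _
    rw [inner_sub_right]
    change inner ℂ (ce ξ) (Z ξ) = _ at h1
    rw [h1, sub_neg_eq_add, ← inner_add_right, ce_inner]
    apply Finset.sum_congr rfl
    intro i _
    rw [PiLp.add_apply, hVj, hMVj]
    have e : (fun y => Complex.exp (φ y) * v i y) = fun y => v i y + m y * v i y := by
      ext y; rw [hm]; ring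
    have hmi : Integrable (fun y => m y * v i y) := by
      have := (smulLeftCLM ℂ (m : Euc d → ℂ) (v i)).integrable (μ := volume)
      refine this.congr (Filter.Eventually.of_forall fun y => ?_)
      exact smulLeftCLM_apply_apply m.hasTemperateGrowth (v i) y
    rw [e, fourier_add_int (v i).integrable hmi]

end partH

section partI
variable {d : ℕ}

theorem core (hd : 3 ≤ d) {s : ℝ} (hs : (d:ℝ) / 2 < s) (a : ℝ≥0) : ∃ K : ℝ≥0,
    ∀ (φ : 𝓢(Euc d, ℝ)) (v : Fin d → 𝓢(Euc d, ℂ)), eN s (fun ξ => ‖𝓕 (cphi φ : Euc d → ℂ) ξ‖ₑ) ≤ a →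
    ∃ Z W : Euc d → HH d, Measurable Z ∧ Measurable W ∧
      (∀ ξ j, 𝓕 (v j : Euc d → ℂ) ξ = Z ξ j + W ξ j) ∧
      (∀ ξ i j, (ξ i : ℂ) * W ξ j - ξ j * W ξ i
        = ξ i * 𝓕 (v j : Euc d → ℂ) ξ - ξ j * 𝓕 (v i : Euc d → ℂ) ξ) ∧
      (∀ ξ, ∑ i, (ξ i : ℂ) * W ξ i = ∑ i, (ξ i : ℂ) * 𝓕 (fun y => Complex.exp (φ y) * v i y) ξ) ∧
      eN (s + 1) (fun ξ => ‖Z ξ‖ₑ) ≤ K * (1 + eN (s + 1) (fun ξ => ‖𝓕 (cphi φ : Euc d → ℂ) ξ‖ₑ)) *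
        L2 (fun ξ => ‖ξ‖ₑ * ew s ξ * ‖W ξ‖ₑ) := by
  have hd3 : (3:ℝ) ≤ d := by exact_mod_cast hd
  have hs1 : 1 ≤ s := by linarith
  obtain ⟨Km, hKm⟩ := em_bound hs1 hs a
  obtain ⟨Cw, hCw⟩ := W_L1 hd hs
  obtain ⟨C0, hC0⟩ := embed0 hs
  set ε : ℝ := min ((s - d / 2) / 2) 1 with hε
  have hε0 : 0 < ε := lt_min (by linarith) one_pos
  have hε1 : ε ≤ 1 := min_le_right _ _
  have hεd : (d:ℝ) / 2 < s - ε := by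
    have : ε ≤ (s - d / 2) / 2 := min_le_left _ _
    linarith
  obtain ⟨C1, hC1⟩ := energyT (d := d) (H := HH d) hs1 hε0.le hε1 hεd
  obtain ⟨C2, hC2⟩ := energyT (d := d) (H := HH d) (t := s + 1) (ε := 1) (by linarith) zero_le_one le_rfl (by linarith)
  set B : ℝ≥0 := ((Real.exp (-(Km:ℝ)))⁻¹).toNNReal with hB
  obtain ⟨Ka, hKa⟩ := absorb (d := d) hε0 (hε1.trans hs1) (B * C1 * Km)
  set K1 : ℝ≥0 := Ka * (B * (Km * Cw)) + 2 * (B * C1 * (Km * Cw + C0 * Km)) with hK1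
  refine ⟨B * C2 * (Km * (K1 + Cw) + C0 * Km), fun φ v ha => ?_⟩
  obtain ⟨m, hm⟩ := exists_em φ
  obtain ⟨hφ, hms, hms1⟩ := hKm φ m hm ha
  obtain ⟨Z, W, hS, hfin, h1, h2, h3⟩ := exists_setup φ m hm hφ v
  refine ⟨Z, W, hS.hZ, hS.hW, h1, h2, h3, ?_⟩
  have e0 := hS.energy0
  have e1 := hC1 m _ Z W hS
  have e2 := hC2 m _ Z W hS
  have hBe : ENNReal.ofReal (Real.exp (-(Km:ℝ)))⁻¹ = (B : ℝ≥0∞) := rfl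
  rw [hBe] at e0 e1 e2
  have hMm : Measurable (fun ξ => ‖𝓕 (m : Euc d → ℂ) ξ‖ₑ) := (fourier_cont m.integrable).measurable.enorm
  have hWI := hCw (fun ξ => ‖W ξ‖ₑ) hS.hW.enorm
  have hMI := (hC0 _ hMm).trans (mul_le_mul_right hms _)
  set E := L2 (fun ξ => ‖ξ‖ₑ * ew s ξ * ‖W ξ‖ₑ) with hE
  have hE1 : L2 (fun ξ => ‖ξ‖ₑ * ew (s - 1) ξ * ‖W ξ‖ₑ) ≤ E := by
    refine L2_mono fun ξ => ?_
    gcongr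
    exact ew_mono (by linarith) ξ
  rw [show s + 1 - 1 = s by ring] at e2
  rw [← hE] at e2
  set P := eN (s + 1) (fun ξ => ‖𝓕 (cphi φ : Euc d → ℂ) ξ‖ₑ) with hP
  have hM0 := (eN_mono (show (0:ℝ) ≤ s by linarith) (fun ξ => ‖𝓕 (m : Euc d → ℂ) ξ‖ₑ)).trans hms
  have f0 : eN 0 (fun ξ => ‖Z ξ‖ₑ) ≤ B * (Km * (Cw * E)) := by
    refine e0.trans ?_
    gcongr
  have f1 : eN s (fun ξ => ‖Z ξ‖ₑ) ≤ (B * C1 * Km : ℝ≥0) * eN (s - ε) (fun ξ => ‖Z ξ‖ₑ)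
      + B * C1 * (Km * Cw + C0 * Km) * E := by
    calc _ ≤ (B:ℝ≥0∞) * (C1 * (Km * (eN (s - ε) (fun ξ => ‖Z ξ‖ₑ) + Cw * E) + (C0 * Km) * E)) := by
          refine e1.trans ?_
          gcongr
      _ = _ := by push_cast; ring
  have f2 : eN s (fun ξ => ‖Z ξ‖ₑ) ≤ K1 * E := by
    refine (hKa _ _ hS.hZ.enorm (hfin s) f1).trans ?_
    calc _ ≤ (Ka:ℝ≥0∞) * (B * (Km * (Cw * E))) + 2 * (B * C1 * (Km * Cw + C0 * Km) * E) := by gcongr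
      _ = _ := by rw [hK1]; push_cast; ring
  have hE' : E ≤ (1 + P) * E := le_mul_of_one_le_left zero_le (by simp)
  calc _ ≤ (B:ℝ≥0∞) * (C2 * ((Km * (1 + P)) * (K1 * E + Cw * E) + (C0 * Km) * ((1 + P) * E))) := by
        refine e2.trans ?_
        gcongr
    _ = _ := by push_cast; ring

theorem core2 (hd : 3 ≤ d) {s : ℝ} (hs : (d:ℝ) / 2 < s) (a : ℝ≥0) : ∃ K : ℝ≥0,
    ∀ (φ : 𝓢(Euc d, ℝ)) (v : Fin d → 𝓢(Euc d, ℂ)), eN s (fun ξ => ‖𝓕 (cphi φ : Euc d → ℂ) ξ‖ₑ) ≤ a →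
    ∀ k l : Fin d, eN s (fun ξ => ‖(ξ k : ℂ) * 𝓕 (v l : Euc d → ℂ) ξ‖ₑ) ≤
      K * (1 + eN (s + 1) (fun ξ => ‖𝓕 (cphi φ : Euc d → ℂ) ξ‖ₑ)) *
      ((∑ i, ∑ j, eN s (fun ξ => ‖(ξ i : ℂ) * 𝓕 (v j : Euc d → ℂ) ξ - ξ j * 𝓕 (v i : Euc d → ℂ) ξ‖ₑ)) +
        d * eN s (fun ξ => ‖∑ i, (ξ i : ℂ) * 𝓕 (fun y => Complex.exp (φ y) * v i y) ξ‖ₑ)) := by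
  obtain ⟨K, hK⟩ := core hd hs a
  refine ⟨K + 1, fun φ v ha k l => ?_⟩
  obtain ⟨Z, W, hZ, hW, h1, h2, h3, h4⟩ := hK φ v ha
  set E := L2 (fun ξ => ‖ξ‖ₑ * ew s ξ * ‖W ξ‖ₑ) with hE
  set P := eN (s + 1) (fun ξ => ‖𝓕 (cphi φ : Euc d → ℂ) ξ‖ₑ) with hP
  set R := ((∑ i, ∑ j, eN s (fun ξ => ‖(ξ i : ℂ) * 𝓕 (v j : Euc d → ℂ) ξ - ξ j * 𝓕 (v i : Euc d → ℂ) ξ‖ₑ)) +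
        d * eN s (fun ξ => ‖∑ i, (ξ i : ℂ) * 𝓕 (fun y => Complex.exp (φ y) * v i y) ξ‖ₑ)) with hR
  have hWj : ∀ j, Measurable (fun ξ => W ξ j) := fun j =>
    (EuclideanSpace.proj (𝕜 := ℂ) j : HH d →L[ℂ] ℂ).continuous.measurable.comp hW
  have hξ : ∀ j, Measurable (fun ξ : Euc d => (ξ j : ℂ)) := fun j => by fun_prop
  have hc : ∀ i j, AEMeasurable (fun ξ : Euc d => ew s ξ * ‖(ξ i : ℂ) * W ξ j - ξ j * W ξ i‖ₑ) := fun i j =>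
    ((measurable_ew s).mul (((hξ i).mul (hWj j)).sub ((hξ j).mul (hWj i))).enorm).aemeasurable
  have hdv : AEMeasurable (fun ξ : Euc d => ew s ξ * ‖∑ i, (ξ i : ℂ) * W ξ i‖ₑ) :=
    ((measurable_ew s).mul (Finset.measurable_sum _ fun i _ => (hξ i).mul (hWj i)).enorm).aemeasurable
  have hER : E ≤ R := by
    have hpt : ∀ ξ : Euc d, ‖ξ‖ₑ * ew s ξ * ‖W ξ‖ₑ ≤ (∑ i, ∑ j, ew s ξ * ‖(ξ i : ℂ) * W ξ j - ξ j * W ξ i‖ₑ)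
        + d * (ew s ξ * ‖∑ i, (ξ i : ℂ) * W ξ i‖ₑ) := by
      intro ξ
      have h := ENNReal.ofReal_le_ofReal (div_curl ξ (W ξ))
      rw [ENNReal.ofReal_mul (norm_nonneg _), ENNReal.ofReal_add (by positivity) (by positivity),
        ENNReal.ofReal_sum_of_nonneg (fun i _ => by positivity), ENNReal.ofReal_mul (by positivity)] at h
      simp only [ENNReal.ofReal_sum_of_nonneg (fun i _ => norm_nonneg _), ofReal_norm, ENNReal.ofReal_natCast] at h
      calc ‖ξ‖ₑ * ew s ξ * ‖W ξ‖ₑ = ew s ξ * (‖ξ‖ₑ * ‖W ξ‖ₑ) := by ring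
        _ ≤ _ := mul_le_mul_right h _
        _ = _ := by
          rw [mul_add, Finset.mul_sum]
          simp only [Finset.mul_sum]
          ring
    refine (L2_mono hpt).trans ?_
    refine (L2_add_le (Finset.aemeasurable_fun_sum _ fun i _ => Finset.aemeasurable_fun_sum _ fun j _ => hc i j) (hdv.const_mul _)).trans ?_
    rw [L2_const_mul hdv]
    refine add_le_add ?_ ?_
    · refine (L2_sum_le _ fun i => Finset.aemeasurable_fun_sum _ fun j _ => hc i j).trans ?_
      refine Finset.sum_le_sum fun i _ => ?_
      refine (L2_sum_le _ fun j => hc i j).trans ?_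
      refine Finset.sum_le_sum fun j _ => ?_
      simp only [h2]; exact le_rfl
    · simp only [h3]; exact le_rfl
  have hE' : E ≤ (1 + P) * E := le_mul_of_one_le_left zero_le (by simp)
  have hmE : AEMeasurable (fun ξ => ‖ξ‖ₑ * ew s ξ * ‖W ξ‖ₑ) :=
    ((measurable_enorm.mul (measurable_ew s)).mul hW.enorm).aemeasurable
  have hmZ : AEMeasurable (fun ξ => ew (s + 1) ξ * ‖Z ξ‖ₑ) :=
    ((measurable_ew _).mul hZ.enorm).aemeasurable
  calc _ ≤ L2 (fun ξ => ew (s + 1) ξ * ‖Z ξ‖ₑ + ‖ξ‖ₑ * ew s ξ * ‖W ξ‖ₑ) := by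
        refine L2_mono fun ξ => ?_
        have hk : ‖(ξ k : ℂ)‖ₑ ≤ ‖ξ‖ₑ := by
          rw [← ofReal_norm, ← ofReal_norm, Complex.norm_real]
          exact ENNReal.ofReal_le_ofReal (PiLp.norm_apply_le ξ k)
        have hj : ‖ξ‖ₑ ≤ ew 1 ξ := by
          rw [← ofReal_norm, ew, wt_one]
          exact ENNReal.ofReal_le_ofReal (norm_le_jb ξ)
        have hl : ∀ w : HH d, ‖w l‖ₑ ≤ ‖w‖ₑ := fun w => by
          rw [← ofReal_norm, ← ofReal_norm]
          exact ENNReal.ofReal_le_ofReal (PiLp.norm_apply_le w l)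
        beta_reduce
        rw [h1, enorm_mul, ew_add]
        calc ew s ξ * (‖(ξ k : ℂ)‖ₑ * ‖Z ξ l + W ξ l‖ₑ) ≤ ew s ξ * (‖ξ‖ₑ * (‖Z ξ‖ₑ + ‖W ξ‖ₑ)) := by
              gcongr
              exact (enorm_add_le _ _).trans (add_le_add (hl _) (hl _))
          _ = ew s ξ * ‖ξ‖ₑ * ‖Z ξ‖ₑ + ‖ξ‖ₑ * ew s ξ * ‖W ξ‖ₑ := by ring
          _ ≤ _ := by gcongr
    _ ≤ eN (s + 1) (fun ξ => ‖Z ξ‖ₑ) + E := L2_add_le hmZ hmE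
    _ ≤ K * (1 + P) * E + (1 + P) * E := add_le_add h4 hE'
    _ = (K + 1 : ℝ≥0) * (1 + P) * E := by push_cast; ring
    _ ≤ _ := by push_cast; gcongr

end partI

section partJ
variable {d : ℕ}

theorem two_pi_enorm : (1:ℝ≥0∞) ≤ ‖(2 * π * Complex.I : ℂ)‖ₑ := by
  rw [← ofReal_norm]
  have : (1:ℝ) ≤ ‖(2 * π * Complex.I : ℂ)‖ := by
    simp [abs_of_pos Real.pi_pos]
    have := Real.pi_gt_three
    linarith
  simpa using ENNReal.ofReal_le_ofReal this

theorem pd_part (f : 𝓢(Euc d, ℂ)) (i : Fin d) (s : ℝ) :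
    ENNReal.ofReal (hNorm d s (pd d i f)) ≤
      ‖(2 * π * Complex.I : ℂ)‖ₑ * eN s (fun ξ => ‖(ξ i : ℂ) * 𝓕 (f : Euc d → ℂ) ξ‖ₑ) := by
  have h := eN_hNorm (LineDeriv.lineDerivOp (EuclideanSpace.single i (1:ℝ)) f) s
  rw [← pd_eq] at h
  rw [← h]
  have hm : Measurable (fun ξ => ‖(ξ i : ℂ) * 𝓕 (f : Euc d → ℂ) ξ‖ₑ) := by
    have h1 : Measurable (fun ξ : Euc d => (ξ i : ℂ)) := by fun_prop
    exact (h1.mul (fourier_cont f.integrable).measurable).enorm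
  refine L2_const_mul_le ((measurable_ew s).mul hm).aemeasurable _ fun ξ => ?_
  change ew s ξ * ‖𝓕 (pd d i f) ξ‖ₑ ≤ _ * (ew s ξ * ‖(ξ i : ℂ) * 𝓕 (f : Euc d → ℂ) ξ‖ₑ)
  rw [fourier_pd, enorm_mul (2 * π * Complex.I : ℂ)]
  exact le_of_eq (by ring)

theorem map_sub_fourier (f g : 𝓢(Euc d, ℂ)) : 𝓕 (f - g) = 𝓕 f - 𝓕 g :=
  map_sub (FourierTransform.fourierCLM ℂ 𝓢(Euc d, ℂ)) f g

theorem curl_part (f g : 𝓢(Euc d, ℂ)) (i j : Fin d) (s : ℝ) :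
    eN s (fun ξ => ‖(ξ i : ℂ) * 𝓕 (f : Euc d → ℂ) ξ - ξ j * 𝓕 (g : Euc d → ℂ) ξ‖ₑ) ≤
    ENNReal.ofReal (hNorm d s (fun x => pd d i f x - pd d j g x)) := by
  have h := eN_hNorm (LineDeriv.lineDerivOp (EuclideanSpace.single i (1:ℝ)) f
    - LineDeriv.lineDerivOp (EuclideanSpace.single j (1:ℝ)) g) s
  have e : ⇑(LineDeriv.lineDerivOp (EuclideanSpace.single i (1:ℝ)) f
    - LineDeriv.lineDerivOp (EuclideanSpace.single j (1:ℝ)) g) = fun x => pd d i f x - pd d j g x := by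
    rw [pd_eq, pd_eq]; rfl
  have e2 : ∀ ξ, 𝓕 (fun x => pd d i f x - pd d j g x) ξ =
      2 * π * Complex.I * ((ξ i : ℂ) * 𝓕 (f : Euc d → ℂ) ξ - ξ j * 𝓕 (g : Euc d → ℂ) ξ) := by
    intro ξ
    rw [mul_sub, ← fourier_pd, ← fourier_pd, ← e, ← fourier_coe, map_sub_fourier, sub_apply,
      fourier_coe, fourier_coe, pd_eq, pd_eq]
  rw [e] at h
  rw [← h]
  refine L2_mono fun ξ => ?_
  beta_reduce
  rw [e2, enorm_mul (2 * π * Complex.I : ℂ)]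
  gcongr
  exact le_mul_of_one_le_left zero_le two_pi_enorm

theorem div_part (u : Fin d → 𝓢(Euc d, ℂ)) (s : ℝ) :
    eN s (fun ξ => ‖∑ i, (ξ i : ℂ) * 𝓕 (u i : Euc d → ℂ) ξ‖ₑ) ≤
    ENNReal.ofReal (hNorm d s (fun x => ∑ i, pd d i (u i) x)) := by
  have h := eN_hNorm (∑ i, LineDeriv.lineDerivOp (EuclideanSpace.single i (1:ℝ)) (u i)) s
  have e : ⇑(∑ i, LineDeriv.lineDerivOp (EuclideanSpace.single i (1:ℝ)) (u i)) = fun x => ∑ i, pd d i (u i) x := by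
    ext x
    rw [sum_apply]
    simp only [pd_eq]
  have e2 : ∀ ξ, 𝓕 (fun x => ∑ i, pd d i (u i) x) ξ =
      2 * π * Complex.I * (∑ i, (ξ i : ℂ) * 𝓕 (u i : Euc d → ℂ) ξ) := by
    intro ξ
    rw [Finset.mul_sum]
    simp only [← fourier_pd]
    rw [← e, ← fourier_coe, FourierTransform.fourier_sum, sum_apply]
    simp only [fourier_coe, pd_eq]
  rw [e] at h
  rw [← h]
  refine L2_mono fun ξ => ?_
  beta_reduce
  rw [e2, enorm_mul (2 * π * Complex.I : ℂ)]
  gcongr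
  exact le_mul_of_one_le_left zero_le two_pi_enorm

theorem exists_expv (φ : 𝓢(Euc d, ℝ)) (v : 𝓢(Euc d, ℂ)) :
    ∃ u : 𝓢(Euc d, ℂ), (u : Euc d → ℂ) = fun y => Complex.exp (φ y) * v y := by
  obtain ⟨m, hm⟩ := exists_em φ
  refine ⟨v + smulLeftCLM ℂ (m : Euc d → ℂ) v, ?_⟩
  ext y
  rw [add_apply, smulLeftCLM_apply_apply m.hasTemperateGrowth, hm, smul_eq_mul]
  ring

theorem hNormSq_nonneg (s : ℝ) (f : Euc d → ℂ) : 0 ≤ hNormSq d s f := by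
  unfold hNormSq
  exact integral_nonneg fun ξ => by positivity

theorem hNorm_sq (s : ℝ) (f : Euc d → ℂ) : hNorm d s f ^ 2 = hNormSq d s f :=
  Real.sq_sqrt (hNormSq_nonneg s f)

theorem core3 (hd : 3 ≤ d) {s : ℝ} (hs : (d:ℝ) / 2 < s) (a : ℝ) : ∃ K : ℝ,
    ∀ (φ : 𝓢(Euc d, ℝ)) (v : Fin d → 𝓢(Euc d, ℂ)), hNorm d s (fun x => (φ x : ℂ)) = a →
      Real.sqrt (∑ i, ∑ j, hNormSq d s (pd d i (v j)))
        ≤ ((1 + hNorm d (s + 1) (fun x => (φ x : ℂ))) * K) *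
          (hNorm d s (fun x => ∑ i, pd d i (fun y => Complex.exp (φ y) * v i y) x)
            + Real.sqrt (∑ i, ∑ j, hNormSq d s (fun x => pd d i (v j) x - pd d j (v i) x))) := by
  obtain ⟨K, hK⟩ := core2 hd hs a.toNNReal
  set T : ℝ := ‖(2 * π * Complex.I : ℂ)‖ with hT
  refine ⟨d * d * T * K * (d * d + d), fun φ v ha => ?_⟩
  have ha' : eN s (fun ξ => ‖𝓕 (cphi φ : Euc d → ℂ) ξ‖ₑ) ≤ a.toNNReal := by
    rw [eN_hNorm, cphi_coe, ha]; exact le_rfl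
  have hk := hK φ v ha'
  rw [eN_hNorm, cphi_coe] at hk
  choose u hu using fun i => exists_expv φ (v i)
  have hdv := div_part u s
  simp only [hu] at hdv
  set P := hNorm d (s + 1) (fun x => (φ x : ℂ)) with hP
  set D := hNorm d s (fun x => ∑ i, pd d i (fun y => Complex.exp (φ y) * v i y) x) with hD
  set S := Real.sqrt (∑ i, ∑ j, hNormSq d s (fun x => pd d i (v j) x - pd d j (v i) x)) with hS
  have hP0 : 0 ≤ P := Real.sqrt_nonneg _
  have hD0 : 0 ≤ D := Real.sqrt_nonneg _
  have hS0 : 0 ≤ S := Real.sqrt_nonneg _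
  have hT0 : 0 ≤ T := norm_nonneg _
  have hcS : ∀ i j, hNorm d s (fun x => pd d i (v j) x - pd d j (v i) x) ≤ S := by
    intro i j
    refine Real.sqrt_le_sqrt ?_
    refine (Finset.single_le_sum (f := fun j => hNormSq d s (fun x => pd d i (v j) x - pd d j (v i) x))
      (fun j _ => hNormSq_nonneg _ _) (Finset.mem_univ j)).trans ?_
    exact Finset.single_le_sum (f := fun i => ∑ j, hNormSq d s (fun x => pd d i (v j) x - pd d j (v i) x))
      (fun i _ => Finset.sum_nonneg fun j _ => hNormSq_nonneg _ _) (Finset.mem_univ i)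
  have hN : ∀ k l, hNorm d s (pd d k (v l)) ≤ T * (K * (1 + P) * (d * d * S + d * D)) := by
    intro k l
    have hsum : (∑ i, ∑ j, eN s (fun ξ => ‖(ξ i : ℂ) * 𝓕 (v j : Euc d → ℂ) ξ - ξ j * 𝓕 (v i : Euc d → ℂ) ξ‖ₑ))
        ≤ ENNReal.ofReal (d * d * S) := by
      calc _ ≤ ∑ i : Fin d, ∑ j : Fin d, ENNReal.ofReal S :=
            Finset.sum_le_sum fun i _ => Finset.sum_le_sum fun j _ =>
              (curl_part (v j) (v i) i j s).trans (ENNReal.ofReal_le_ofReal (hcS i j))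
        _ = _ := by
          simp only [Finset.sum_const, Finset.card_univ, Fintype.card_fin, nsmul_eq_mul]
          rw [ENNReal.ofReal_mul (by positivity), ENNReal.ofReal_mul (by positivity), ENNReal.ofReal_natCast, mul_assoc]
    have hfin : ENNReal.ofReal (hNorm d s (pd d k (v l))) ≤
        ENNReal.ofReal (T * (K * (1 + P) * (d * d * S + d * D))) := by
      rw [ENNReal.ofReal_mul hT0, ENNReal.ofReal_mul (by positivity), ENNReal.ofReal_mul (by positivity),
        ENNReal.ofReal_add zero_le_one hP0, ENNReal.ofReal_add (by positivity) (by positivity),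
        ENNReal.ofReal_mul (p := (d:ℝ)) (q := D) (by positivity), ENNReal.ofReal_natCast, ENNReal.ofReal_one, hT, ofReal_norm,
        ENNReal.ofReal_coe_nnreal]
      refine (pd_part (v l) k s).trans (mul_le_mul_right ((hk k l).trans ?_) _)
      gcongr
    exact (ENNReal.ofReal_le_ofReal_iff (by positivity)).1 hfin
  set Q := T * (K * (1 + P) * (d * d * S + d * D)) with hQ
  have hQ0 : 0 ≤ Q := by positivity
  have h1 : Real.sqrt (∑ i, ∑ j, hNormSq d s (pd d i (v j))) ≤ d * d * Q := by
    refine Real.sqrt_le_iff.2 ⟨by positivity, ?_⟩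
    have hd1 : (1:ℝ) ≤ d := by exact_mod_cast (by omega : 1 ≤ d)
    calc _ ≤ ∑ i : Fin d, ∑ j : Fin d, Q ^ 2 := by
          refine Finset.sum_le_sum fun i _ => Finset.sum_le_sum fun j _ => ?_
          rw [← hNorm_sq]
          exact pow_le_pow_left₀ (Real.sqrt_nonneg _) (hN i j) 2
      _ = (d * d) * Q ^ 2 := by simp; ring
      _ ≤ (d * d) * ((d * d) * Q ^ 2) := by
          gcongr
          exact le_mul_of_one_le_left (by positivity) (by nlinarith)
      _ = _ := by ring
  refine h1.trans ?_
  calc d * d * Q ≤ d * d * (T * (K * (1 + P) * ((d * d + d) * (D + S)))) := by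
        rw [hQ]; gcongr
        have h1 : 0 ≤ (d:ℝ) * d * D := by positivity
        have h2 : 0 ≤ (d:ℝ) * S := by positivity
        nlinarith
    _ = _ := by ring

end partJ

end helpers

/-- Weighted Friedrichs estimate (Proposition 2.7):
`‖∇v‖_{H^s} ≤ C (‖div(e^φ v)‖_{H^s} + ‖curl v‖_{H^s})`
with `C = (1+‖φ‖_{H^{s+1}}) 𝒞(‖φ‖_{H^s}, ‖∇φ‖_{L^∞})`. -/
theorem statement7 (d s : ℕ) (hd : 3 ≤ d) (hs : (d : ℝ) / 2 < s) :
    ∃ C : ℝ → ℝ → ℝ, ∀ (φ : 𝓢(Euc d, ℝ)) (v : Fin d → 𝓢(Euc d, ℂ)),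
      Real.sqrt (∑ i, ∑ j, hNormSq d s (pd d i (v j)))
        ≤ ((1 + hNorm d ((s : ℝ) + 1) (fun x => (φ x : ℂ))) *
            C (hNorm d s (fun x => (φ x : ℂ))) (⨆ x, ‖fderiv ℝ (⇑φ) x‖)) *
          (hNorm d s
              (fun x => ∑ i, pd d i (fun y => Complex.exp (φ y) * v i y) x)
            + Real.sqrt (∑ i, ∑ j, hNormSq d s
                (fun x => pd d i (v j) x - pd d j (v i) x))) := by
  choose K hK using core3 hd hs
  exact ⟨fun a _ => K a, fun φ v => hK _ φ v rfl⟩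
end
end
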